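/- arXiv:2407.10150 — 2 statements merged into one kernel-verified Lean document; each statement's English description precedes it below -/
import Mathlib

section
/- Let A be a standard operator algebra on a complex Banach space E. Fix integers m, k with k ≥ 2 and a sequence (i_1, …, i_m) with {i_1, …, i_m} = {1, …, k} such that some index i_p is different from i_q for all q ≠ p; define the generalized Jordan product T_1 ∘ ⋯ ∘ T_k = T_{i_1}⋯T_{i_m} + T_{i_m}⋯T_{i_1}. Let φ : A → A be a (not necessarily linear, additive or continuous) map whose range contains all bounded operators on E of rank at most three. Suppose for any a_1, …, a_k ∈ A, in which at least one a_j has rank at most one, there is a linear Jordan automorphism θ of A with φ(a_1) ∘ ⋯ ∘ φ(a_k) = θ(a_1 ∘ ⋯ ∘ a_k). Then there is a complex scalar ξ with ξ^m = 1 such that either there is an invertible operator S ∈ B(E) with φ(a) = ξ S a S⁻¹ for all a ∈ A, or there is an invertible bounded linear operator S from the continuous dual E′ onto E with φ(a) = ξ S a′ S⁻¹ for all a ∈ A, where a′ : E′ → E′ denotes the dual (adjoint) map of a. -/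
set_option synthInstance.maxHeartbeats 1000000
set_option maxHeartbeats 1000000

open Cardinal ContinuousLinearMap

/-- A linear Jordan automorphism of a complex algebra: a bijective complex-linear map `J`
with `J (ab + ba) = J a * J b + J b * J a` for all `a, b`. -/
def IsJordanAutomorphism {A : Type*} [Ring A] [Algebra ℂ A] (θ : A → A) : Prop :=
  Function.Bijective θ ∧ IsLinearMap ℂ θ ∧
    ∀ a b : A, θ (a * b + b * a) = θ a * θ b + θ b * θ a

/-- The dual (adjoint) map `a' : E' → E'`, `f ↦ f ∘ a`, of a bounded operator `a` on `E`. -/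
noncomputable def dualOp {E : Type*} [NormedAddCommGroup E] [NormedSpace ℂ E]
    (a : E →L[ℂ] E) : (E →L[ℂ] ℂ) →L[ℂ] (E →L[ℂ] ℂ) :=
  (ContinuousLinearMap.compL ℂ E E ℂ).flip a

/-!
Write `f ⊗ x` for the operator `z ↦ f z • x`, whose trace is `f x`. A linear Jordan automorphism of
`A` maps operators of rank one to operators of rank one and preserves their trace. Fill the slot of
the generalized Jordan product that occurs once with `a` and all others with an idempotent
`b = f ⊗ x`. Then `φ b` is, up to a nilpotent summand `N`, a root of unity times an idempotent of
rank one; as the range of `φ` contains all operators of rank two, `N` is so short that the trace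
of the word yields `k` and `u` with `tr (φ a * (k ⊗ u)) = tr (a * (f ⊗ x))` for all `a`, and with
`k u` a root of unity.

So `φ` has a transpose `(x, f) ↦ k ⊗ u` for the trace pairing. It is bilinear because the range of
`φ` separates the operators of rank one, and a bilinear map whose values have rank at most one is
of the form `V f ⊗ U x` or `V x ⊗ U f`. Since `V f (U x)` and `f x` have the same `m`-th power
whenever `f x ≠ 0`, they differ by a constant root of unity. The closed graph theorem then makes
`U` an isomorphism, which conjugates `a`, respectively its dual, into a multiple of `φ a`.
-/

section Jordan

variable {R S 𝕜 : Type*}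

/-- A map between rings is a *Jordan homomorphism* if it respects the Jordan product
`ab + ba`. The predicate is put on bare functions and carries no linearity. -/
def IsJordanHom [Ring R] [Ring S] (θ : R → S) : Prop :=
  ∀ a b, θ (a * b + b * a) = θ a * θ b + θ b * θ a

lemma IsJordanAutomorphism.exists_linearEquiv [Ring R] [Algebra ℂ R] {θ : R → R}
    (hθ : IsJordanAutomorphism θ) : ∃ e : R ≃ₗ[ℂ] R, ⇑e = θ ∧ IsJordanHom e :=
  ⟨.ofBijective (hθ.2.1.mk' θ) hθ.1, rfl, hθ.2.2⟩

section Linear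

variable [Field 𝕜] [NeZero (2 : 𝕜)] [Ring R] [Algebra 𝕜 R] [Ring S] [Algebra 𝕜 S]
  {θ : R →ₗ[𝕜] S}

lemma IsJordanHom.map_mul_self (hθ : IsJordanHom θ) (a : R) : θ (a * a) = θ a * θ a := by
  have h := hθ a a
  rw [map_add, ← two_smul 𝕜, ← two_smul 𝕜 (θ a * θ a)] at h
  exact smul_right_injective S two_ne_zero h

lemma IsJordanHom.map_mul_mul_self (hθ : IsJordanHom θ) (a b : R) :
    θ (a * b * a) = θ a * θ b * θ a := by
  -- `2aba = a ∘ (a ∘ b) - a² ∘ b` for the Jordan product `x ∘ y = xy + yx`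
  have h := hθ a (a * b + b * a)
  have expand : a * (a * b + b * a) + (a * b + b * a) * a =
      (2 : 𝕜) • (a * b * a) + (a * a * b + b * (a * a)) := by
    rw [two_smul]; noncomm_ring
  rw [expand, map_add, map_smul, hθ (a * a) b, hθ a b, hθ.map_mul_self] at h
  refine smul_right_injective S (two_ne_zero (α := 𝕜)) ?_
  dsimp only
  rw [eq_sub_of_add_eq h, two_smul]
  noncomm_ring

end Linear

lemma ofFn_update_const {α : Type*} {m : ℕ} (p : Fin m) (a b : α) :
    List.ofFn (Function.update (fun _ => b) p a) =
      List.replicate p b ++ a :: List.replicate (m - 1 - p) b := by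
  have hp := p.2
  refine List.ext_getElem (by simp; lia) fun n hn _ => ?_
  have hnp : (⟨n, by simpa using hn⟩ : Fin m) = p ↔ n = p := Fin.ext_iff
  simp only [List.getElem_ofFn, Function.update_apply, hnp]
  grind

section JordanWord

variable [Ring R]

/-- The generalized Jordan product in which one factor `a` occurs once and all other factors
are equal to `b`: `a` has `r` factors on one side and `s` factors on the other. -/
def jordanWord (r s : ℕ) (b a : R) : R := b ^ r * a * b ^ s + b ^ s * a * b ^ r

lemma jordanWord_comm (r s : ℕ) (b a : R) : jordanWord r s b a = jordanWord s r b a :=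
  add_comm _ _

lemma jordanWord_self [CommRing 𝕜] [Algebra 𝕜 R] (r s : ℕ) (b : R) :
    jordanWord r s b b = (2 : 𝕜) • b ^ (r + s + 1) := by
  rw [jordanWord, ← pow_succ, ← pow_succ, ← pow_add, ← pow_add, two_smul]
  congr 2 <;> lia

lemma jordanWord_add_right (r s : ℕ) (b a₁ a₂ : R) :
    jordanWord r s b (a₁ + a₂) = jordanWord r s b a₁ + jordanWord r s b a₂ := by
  simp only [jordanWord, mul_add, add_mul]
  abel

lemma isNilpotent_jordanWord {r s : ℕ} (hsr : s ≤ r) {b : R} (hb : b ^ (r + s) = 0) (a : R) :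
    IsNilpotent (jordanWord r s b a) := by
  have hrs : b ^ r * b ^ s = 0 := by rw [← pow_add, hb]
  have hsr' : b ^ s * b ^ r = 0 := by rw [← pow_add, add_comm, hb]
  have hrr : b ^ r * b ^ r = 0 := by rw [← pow_add]; exact pow_eq_zero_of_le (by lia) hb
  have vanish {u v : R} (huv : u * v = 0) (c d : R) : c * u * (v * d) = 0 := by
    rw [mul_assoc, ← mul_assoc u, huv, zero_mul, mul_zero]
  set x := b ^ r * a * b ^ s with hx
  set y := b ^ s * a * b ^ r with hy
  have hxx : x * x = 0 := by simpa [hx, mul_assoc] using vanish hsr' (b ^ r * a) (a * b ^ s)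
  have hyy : y * y = 0 := by simpa [hy, mul_assoc] using vanish hrs (b ^ s * a) (a * b ^ r)
  have hyx : y * x = 0 := by simpa [hx, hy, mul_assoc] using vanish hrr (b ^ s * a) (a * b ^ s)
  refine ⟨3, ?_⟩
  calc (x + y) ^ 3 = (x * x + x * y) * (x + y) + (y * x + y * y) * (x + y) := by noncomm_ring
    _ = 0 := by simp [hxx, hyy, hyx, mul_add, mul_assoc]

lemma coe_jordanWord [CommRing 𝕜] [Algebra 𝕜 R] {A : Subalgebra 𝕜 R} (r s : ℕ) (b a : A) :
    (jordanWord r s b a : A) = jordanWord r s (b : R) (a : R) := by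
  simp [jordanWord]

lemma prod_ofFn_update_add_reverse {m : ℕ} (p : Fin m) (a b : R) :
    (List.ofFn (Function.update (fun _ => b) p a)).prod +
      (List.ofFn (Function.update (fun _ => b) p a)).reverse.prod =
      jordanWord p (m - 1 - p) b a := by
  simp [ofFn_update_const, jordanWord, mul_assoc]

end JordanWord

end Jordan

section RankOne

variable {𝕜 E F : Type*} [NontriviallyNormedField 𝕜] [NormedAddCommGroup E] [NormedSpace 𝕜 E]
  [NormedAddCommGroup F] [NormedSpace 𝕜 F]

/-- Bounded operators of rank at most one, given as `k ⊗ u : z ↦ k z • u`. -/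
def IsRankLEOne (T : E →L[𝕜] F) : Prop :=
  ∃ (k : StrongDual 𝕜 E) (u : F), T = k.smulRight u

lemma rank_smulRight_le_one (k : StrongDual 𝕜 E) (u : F) :
    LinearMap.rank (k.smulRight u).toLinearMap ≤ 1 := by
  refine (rank_submodule_le_one_iff' _).2 ⟨u, ?_⟩
  rintro _ ⟨z, rfl⟩
  exact Submodule.smul_mem _ _ (Submodule.mem_span_singleton_self u)

lemma rank_smulRight_add_smulRight_le_two (k l : StrongDual 𝕜 E) (u v : F) :
    LinearMap.rank (k.smulRight u + l.smulRight v).toLinearMap ≤ 2 :=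
  (LinearMap.rank_add_le _ _).trans <|
    (add_le_add (rank_smulRight_le_one k u) (rank_smulRight_le_one l v)).trans_eq one_add_one_eq_two

lemma le_rank_of_linearIndependent_comp {n : ℕ} {T : E →L[𝕜] F} {v : Fin n → E}
    (hv : LinearIndependent 𝕜 (T ∘ v)) : (n : Cardinal) ≤ LinearMap.rank T.toLinearMap := by
  have hrange : LinearIndependent 𝕜 (T.toLinearMap.rangeRestrict ∘ v) :=
    .of_comp (LinearMap.range T.toLinearMap).subtype hv
  simpa using hrange.cardinal_lift_le_rank

lemma apply_self_eq_zero_of_isNilpotent {k : StrongDual 𝕜 E} {u : E}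
    (h : IsNilpotent (k.smulRight u)) : k u = 0 := by
  obtain ⟨n, hn⟩ := h
  have hpow (j : ℕ) : (k.smulRight u ^ j) u = k u ^ j • u := by
    induction j with
    | zero => simp
    | succ j ih => simp [pow_succ', ih, smul_smul, mul_comm]
  have := congrArg k (hpow n)
  simp only [hn, zero_apply, map_zero, map_smul, smul_eq_mul, ← pow_succ] at this
  exact pow_eq_zero_iff n.succ_ne_zero |>.1 this.symm

section Minors

variable [SeparatingDual 𝕜 F]

lemma isRankLEOne_iff_minors_eq {N : E →L[𝕜] F} :
    IsRankLEOne N ↔ ∀ (z w : E) (g g' : StrongDual 𝕜 F),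
      g (N z) * g' (N w) = g (N w) * g' (N z) := by
  refine ⟨?_, fun h => ?_⟩
  · rintro ⟨k, u, rfl⟩ z w g g'
    simp only [smulRight_apply, map_smul, smul_eq_mul]
    ring
  · by_cases hN : N = 0
    · exact ⟨0, 0, by simp [hN]⟩
    obtain ⟨z, hz⟩ : ∃ z, N z ≠ 0 := by
      by_contra! hzero
      exact hN (ContinuousLinearMap.ext hzero)
    obtain ⟨g, hg⟩ := SeparatingDual.exists_eq_one (R := 𝕜) hz
    refine ⟨g.comp N, N z, ContinuousLinearMap.ext fun w => ?_⟩
    rw [SeparatingDual.eq_iff_forall_dual_eq (R := 𝕜)]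
    intro g'
    simpa [hg] using h z w g g'

lemma isClosed_setOf_isRankLEOne : IsClosed {N : E →L[𝕜] F | IsRankLEOne N} := by
  simp only [isRankLEOne_iff_minors_eq, Set.ofPred_forall]
  refine isClosed_iInter fun z => isClosed_iInter fun w => isClosed_iInter fun g =>
    isClosed_iInter fun g' => isClosed_eq ?_ ?_ <;> fun_prop

lemma isRankLEOne_of_forall_add_smul {N₀ N₁ : E →L[𝕜] F}
    (h : ∀ t : 𝕜, t ≠ 0 → IsRankLEOne (N₀ + t • N₁)) : IsRankLEOne N₀ := by
  have hclosed : IsClosed {t : 𝕜 | IsRankLEOne (N₀ + t • N₁)} :=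
    isClosed_setOf_isRankLEOne.preimage (by fun_prop : Continuous fun t : 𝕜 => N₀ + t • N₁)
  have hdense : Dense {t : 𝕜 | IsRankLEOne (N₀ + t • N₁)} :=
    (dense_compl_singleton (0 : 𝕜)).mono h
  have hzero : (0 : 𝕜) ∈ {t : 𝕜 | IsRankLEOne (N₀ + t • N₁)} :=
    hclosed.closure_eq ▸ hdense 0
  simpa using hzero

end Minors

end RankOne

section LinearAlgebra

variable {𝕜 V : Type*} [Field 𝕜] [AddCommGroup V] [Module 𝕜 V]

lemma sum_apply_eq_zero_of_sum_smulRight_eq_zero {ι : Type*} [Fintype ι]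
    {k : ι → Module.Dual 𝕜 V} {u : ι → V} (h : ∑ j, (k j).smulRight (u j) = 0) :
    ∑ j, k j (u j) = 0 := by
  let W := Submodule.span 𝕜 (Set.range u)
  have hu (j : ι) : u j ∈ W := Submodule.subset_span ⟨j, rfl⟩
  have : FiniteDimensional 𝕜 W := .span_of_finite 𝕜 (Set.finite_range u)
  let T : W →ₗ[𝕜] W := ∑ j, (k j ∘ₗ W.subtype).smulRight ⟨u j, hu j⟩
  have hT : T = 0 := by
    ext z
    simpa [T] using LinearMap.congr_fun h z
  have htrace : LinearMap.trace 𝕜 W T = ∑ j, k j (u j) := by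
    simp [T, LinearMap.trace_smulRight]
  rw [← htrace, hT, map_zero]

lemma linearIndependent_of_map_map_eq_zero {h : Module.Dual 𝕜 V} {S : Module.End 𝕜 V}
    {e v : V} (he : h e = 1) (hv : h v = 0) (hSv : h (S v) = 0) (hne : S v ≠ 0)
    (hSS : S (S v) = 0) : LinearIndependent 𝕜 ![e, S v, v] := by
  rw [Fintype.linearIndependent_iff]
  intro c hc
  replace hc : c 0 • e + c 1 • S v + c 2 • v = 0 := by simpa [Fin.sum_univ_three] using hc
  have h0 : c 0 = 0 := by simpa [he, hSv, hv] using congrArg h hc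
  have h2 : c 2 = 0 := by simpa [h0, hSS, hne] using congrArg S hc
  have h1 : c 1 = 0 := by simpa [h0, h2, hne] using hc
  intro j
  fin_cases j <;> assumption

end LinearAlgebra

section Splitting

variable {𝕜 E : Type*} [NontriviallyNormedField 𝕜] [NormedAddCommGroup E] [NormedSpace 𝕜 E]

/-- The operator `B` splits as `ξ (h ⊗ e) ⊕ N`, where `h ⊗ e` is an idempotent of rank one and
`N` acts on the complement `ker h` of the line through `e`. -/
structure IsRankOneSplitting (B : E →L[𝕜] E) (h : StrongDual 𝕜 E) (e : E) (ξ : 𝕜)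
    (N : E →L[𝕜] E) : Prop where
  apply_eq_one : h e = 1
  eq_add : B = ξ • h.smulRight e + N
  map_eq_zero : N e = 0
  apply_map_eq_zero : ∀ z, h (N z) = 0

namespace IsRankOneSplitting

variable {B N : E →L[𝕜] E} {h : StrongDual 𝕜 E} {e : E} {ξ : 𝕜} {j n r s : ℕ}

lemma pow_map_eq_zero (hB : IsRankOneSplitting B h e ξ N) (hj : j ≠ 0) : (N ^ j) e = 0 := by
  obtain ⟨j, rfl⟩ := Nat.exists_eq_succ_of_ne_zero hj
  simp [pow_succ, hB.map_eq_zero]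

lemma apply_pow_eq_zero (hB : IsRankOneSplitting B h e ξ N) (hj : j ≠ 0) (z : E) :
    h ((N ^ j) z) = 0 := by
  obtain ⟨j, rfl⟩ := Nat.exists_eq_succ_of_ne_zero hj
  simp [pow_succ', hB.apply_map_eq_zero]

lemma pow_apply (hB : IsRankOneSplitting B h e ξ N) (hj : j ≠ 0) (z : E) :
    (B ^ j) z = (ξ ^ j * h z) • e + (N ^ j) z := by
  obtain ⟨j, rfl⟩ := Nat.exists_eq_succ_of_ne_zero hj
  induction j with
  | zero => simp [hB.eq_add, mul_smul]
  | succ j ih =>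
    have hNsucc : (N ^ (j + 1 + 1)) z = N ((N ^ (j + 1)) z) := by
      rw [pow_succ', mul_apply_eq_comp]
    rw [pow_succ', mul_apply_eq_comp, ih j.succ_ne_zero, hNsucc, hB.eq_add]
    simp [-pow_apply_eq_iterate, -FunLike.coe_pow_eq_iterate, hB.apply_eq_one, hB.map_eq_zero,
      hB.apply_pow_eq_zero j.succ_ne_zero, smul_smul, pow_succ' ξ, mul_assoc]

lemma pow_apply_self (hB : IsRankOneSplitting B h e ξ N) (j : ℕ) : (B ^ j) e = ξ ^ j • e := by
  rcases eq_or_ne j 0 with rfl | hj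
  · simp
  · simp [hB.pow_apply hj, hB.apply_eq_one, hB.pow_map_eq_zero hj]

lemma apply_pow (hB : IsRankOneSplitting B h e ξ N) (j : ℕ) (z : E) :
    h ((B ^ j) z) = ξ ^ j * h z := by
  rcases eq_or_ne j 0 with rfl | hj
  · simp
  · simp [-pow_apply_eq_iterate, -FunLike.coe_pow_eq_iterate, hB.pow_apply hj, hB.apply_eq_one,
      hB.apply_pow_eq_zero hj]

lemma pow_apply_of_apply_eq_zero (hB : IsRankOneSplitting B h e ξ N) (j : ℕ) {z : E}
    (hz : h z = 0) : (B ^ j) z = (N ^ j) z := by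
  rcases eq_or_ne j 0 with rfl | hj
  · simp
  · simp [hB.pow_apply hj, hz]

lemma pow_eq_smul (hB : IsRankOneSplitting B h e ξ N) (hj : j ≠ 0) (hN : N ^ j = 0) :
    B ^ j = ξ ^ j • h.smulRight e := by
  ext z
  simp [hB.pow_apply hj, hN, mul_smul]

end IsRankOneSplitting

lemma jordanWord_smulRight_apply (r s : ℕ) (B : E →L[𝕜] E) (k : StrongDual 𝕜 E) (u z : E) :
    jordanWord r s B (k.smulRight u) z =
      k ((B ^ s) z) • (B ^ r) u + k ((B ^ r) z) • (B ^ s) u := by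
  simp [jordanWord]

lemma exists_isRankOneSplitting_of_pow_eq {B : E →L[𝕜] E} {h : StrongDual 𝕜 E} {e : E} {n : ℕ}
    (hn : n ≠ 0) (he : h e = 1) (hB : B ^ n = h.smulRight e) :
    ∃ ξ N, IsRankOneSplitting B h e ξ N ∧ ξ ^ n = 1 ∧ N ^ n = 0 := by
  have hcomm (z : E) : h z • B e = h (B z) • e := by
    simpa [hB] using DFunLike.congr_fun (pow_mul_comm' B n).symm z
  have hBe : B e = h (B e) • e := by simpa [he] using hcomm e
  have hhB (z : E) : h (B z) = h (B e) * h z := by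
    simpa [he, mul_comm] using (congrArg h (hcomm z)).symm
  have hsplit : IsRankOneSplitting B h e (h (B e)) (B - h (B e) • h.smulRight e) :=
    { apply_eq_one := he
      eq_add := by abel
      map_eq_zero := by simp [he, ← hBe]
      apply_map_eq_zero := fun z => by simp [he, hhB z] }
  have hξ : h (B e) ^ n = 1 := by simpa [hB, he] using (hsplit.apply_pow n e).symm
  refine ⟨_, _, hsplit, hξ, ContinuousLinearMap.ext fun z => ?_⟩
  simpa [hB, hξ] using hsplit.pow_apply hn z

section Vanishing

variable [SeparatingDual 𝕜 E]
  {B N : E →L[𝕜] E} {h : StrongDual 𝕜 E} {e : E} {ξ : 𝕜} {r s : ℕ}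

lemma IsRankOneSplitting.exists_dual_pow_eq_one (hB : IsRankOneSplitting B h e ξ N) {n : ℕ}
    (hn : n ≠ 0) (hN : N ^ n ≠ 0) :
    ∃ (v : E) (g : StrongDual 𝕜 E), h v = 0 ∧ g e = 0 ∧ g ((N ^ n) v) = 1 := by
  obtain ⟨v, hv⟩ : ∃ v, (N ^ n) v ≠ 0 := by
    by_contra! hzero
    exact hN (ContinuousLinearMap.ext hzero)
  obtain ⟨g, hg⟩ := SeparatingDual.exists_eq_one (R := 𝕜) hv
  refine ⟨v - h v • e, g - g e • h, ?_, ?_, ?_⟩ <;>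
    simp [-pow_apply_eq_iterate, -FunLike.coe_pow_eq_iterate, hB.apply_eq_one, hB.pow_map_eq_zero
      hn, hB.apply_pow_eq_zero hn, hg]

variable [NeZero (2 : 𝕜)]

lemma IsRankOneSplitting.pow_eq_zero_of_isRankLEOne (hB : IsRankOneSplitting B h e ξ N)
    (hξ : ξ ≠ 0) (hs : s ≠ 0) (hsr : s ≤ r) (hN : N ^ (r + s + 1) = 0)
    (hrank : ∀ T : E →L[𝕜] E, LinearMap.rank T.toLinearMap ≤ 2 →
      IsRankLEOne (jordanWord r s B T)) :
    N ^ (r + s) = 0 := by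
  by_contra hne
  obtain ⟨v, g, hv, hge, hgv⟩ := hB.exists_dual_pow_eq_one (by lia) hne
  have hr : r ≠ 0 := by lia
  have hmul (i j : ℕ) (z : E) : (N ^ i) ((N ^ j) z) = (N ^ (i + j)) z := by
    rw [pow_add, mul_apply_eq_comp]
  set W := jordanWord r s B (h.smulRight e + g.smulRight v) with hW
  have hWe : W e = (2 * ξ ^ (r + s)) • e := by
    simp [hW, jordanWord_add_right, jordanWord_smulRight_apply,
      hB.pow_apply_self, hB.apply_eq_one, hge, smul_smul, ← pow_add, add_comm s r, two_mul,
      add_smul]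
  have hWw : W ((N ^ r) v) = (N ^ r) v + g ((N ^ (r + r)) v) • (N ^ s) v := by
    simp [-pow_apply_eq_iterate, -FunLike.coe_pow_eq_iterate, hW, jordanWord_add_right,
      jordanWord_smulRight_apply, hB.pow_apply_of_apply_eq_zero, hB.apply_pow_eq_zero, hr, hs, hv,
      hmul, add_comm s r, hgv]
  have hgN : 1 + g ((N ^ (r + r)) v) * g ((N ^ (s + s)) v) ≠ 0 := by
    rcases hsr.eq_or_lt with rfl | hlt
    · rw [hgv, mul_one, one_add_one_eq_two]
      exact two_ne_zero
    · simp [pow_eq_zero_of_le (by lia : r + s + 1 ≤ r + r) hN]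
  have hminor := isRankLEOne_iff_minors_eq.1
    (hrank _ (rank_smulRight_add_smulRight_le_two h g e v)) e ((N ^ r) v) h (g.comp (N ^ s))
  rw [← hW, hWe, hWw] at hminor
  simp [-pow_apply_eq_iterate, -FunLike.coe_pow_eq_iterate, hB.apply_eq_one, hB.pow_map_eq_zero,
    hB.apply_pow_eq_zero, hr, hs, hmul, add_comm s r, hgv, hgN, hξ, two_ne_zero] at hminor

lemma IsRankOneSplitting.pow_eq_zero_of_rank_le_two (hB : IsRankOneSplitting B h e ξ N)
    (hξ : ξ ≠ 0) (hr : r ≠ 0) (hN : N ^ (r + 1) = 0)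
    (hrank : ∀ T : E →L[𝕜] E, LinearMap.rank T.toLinearMap ≤ 2 →
      LinearMap.rank (jordanWord r 0 B T).toLinearMap ≤ 2) :
    N ^ r = 0 := by
  by_contra hne
  obtain ⟨v, g, hv, hge, hgv⟩ := hB.exists_dual_pow_eq_one hr hne
  set w := (N ^ r) v with hw
  have hNw : (N ^ r) w = 0 := by
    rw [hw, ← mul_apply_eq_comp, ← pow_add, pow_eq_zero_of_le (by lia) hN, zero_apply]
  have hhw : h w = 0 := hB.apply_pow_eq_zero hr v
  have hw0 : w ≠ 0 := fun hw0 => by simp [hw0] at hgv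
  set W := jordanWord r 0 B (h.smulRight e + g.smulRight v) with hW
  have hWz (z : E) : W z = h z • (B ^ r) e + h ((B ^ r) z) • e +
      (g z • (B ^ r) v + g ((B ^ r) z) • v) := by
    simp [hW, jordanWord_add_right, jordanWord_smulRight_apply]
  have hWe : W e = (2 * ξ ^ r) • e := by
    simp [hWz, hB.pow_apply_self, hB.apply_eq_one, hge, two_mul, add_smul]
  have hWw : W w = w := by
    simp [hWz, hB.pow_apply_of_apply_eq_zero, hhw, hNw, hv, hgv, ← hw]
  have hWv : W v = g v • w + v := by
    simp [hWz, hB.pow_apply_of_apply_eq_zero, hv, hgv, hhw, ← hw]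
  have he : ∃ x, W x = e :=
    ⟨(2 * ξ ^ r)⁻¹ • e, by rw [map_smul, hWe, inv_smul_smul₀ (by simp [hξ, two_ne_zero])]⟩
  obtain ⟨x, hx⟩ := he
  have himage : W ∘ ![x, w, v - g v • w] = ![e, w, v] := by
    ext j
    fin_cases j <;> simp [hx, hWw, hWv]
  have hindep : LinearIndependent 𝕜 (W ∘ ![x, w, v - g v • w]) :=
    himage ▸ linearIndependent_of_map_map_eq_zero hB.apply_eq_one hv hhw hw0 hNw
  have hthree := (le_rank_of_linearIndependent_comp hindep).trans
    (hrank _ (rank_smulRight_add_smulRight_le_two h g e v))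
  norm_cast at hthree

end Vanishing

end Splitting

section TraceIdentities

variable {𝕜 E : Type*} [NontriviallyNormedField 𝕜] [NormedAddCommGroup E] [NormedSpace 𝕜 E]

lemma apply_apply_add_apply_apply_eq_of_smulRight_add_eq {k l k' : StrongDual 𝕜 E} {u v u' : E}
    (h : k.smulRight u + l.smulRight v = k'.smulRight u') (T : E →L[𝕜] E) :
    k (T u) + l (T v) = k' (T u') := by
  have hsum : ∑ j, (![k.toLinearMap, l.toLinearMap, -k'.toLinearMap] j).smulRight
      (![T u, T v, T u'] j) = 0 := by
    ext z
    have hz : k z • T u + l z • T v = k' z • T u' := by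
      simpa using congrArg T (DFunLike.congr_fun h z)
    simp [Fin.sum_univ_three, hz]
  simpa [Fin.sum_univ_three, add_neg_eq_zero] using
    sum_apply_eq_zero_of_sum_smulRight_eq_zero hsum

lemma apply_apply_eq_of_smulRight_eq {k k' : StrongDual 𝕜 E} {u u' : E}
    (h : k.smulRight u = k'.smulRight u') (T : E →L[𝕜] E) : k (T u) = k' (T u') := by
  simpa using apply_apply_add_apply_apply_eq_of_smulRight_add_eq (l := 0) (v := 0)
    (by simpa using h) T

namespace IsRankOneSplitting

variable {B N T : E →L[𝕜] E} {h k : StrongDual 𝕜 E} {e y : E} {ξ : 𝕜} {r s : ℕ}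

lemma apply_jordanWord_self (hB : IsRankOneSplitting B h e ξ N) (r s : ℕ) (T : E →L[𝕜] E) :
    h (jordanWord r s B T e) = 2 * ξ ^ (r + s) * h (T e) := by
  simp [-pow_apply_eq_iterate, -FunLike.coe_pow_eq_iterate, jordanWord, hB.pow_apply_self,
    hB.apply_pow]
  ring

lemma apply_eq_of_jordanWord_eq_smulRight (hB : IsRankOneSplitting B h e ξ N) (hs : s ≠ 0)
    (hsr : s ≤ r) (hN : N ^ (r + s) = 0) (hT : jordanWord r s B T = k.smulRight y) :
    k y = 2 * ξ ^ (r + s) * h (T e) := by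
  have hr : r ≠ 0 := by lia
  -- Compressing to `ker h` replaces `B` by the nilpotent `N`, so only the `e`-corner has a trace.
  set Q : E →L[𝕜] E := 1 - h.smulRight e with hQ
  have hQB {j : ℕ} (hj : j ≠ 0) (z : E) : Q ((B ^ j) z) = (N ^ j) z := by
    simp [-pow_apply_eq_iterate, -FunLike.coe_pow_eq_iterate, hQ, hB.pow_apply hj,
      hB.apply_eq_one, hB.apply_pow_eq_zero hj]
  have hBQ {j : ℕ} (hj : j ≠ 0) (z : E) : (B ^ j) (Q z) = (N ^ j) z := by
    simp [-pow_apply_eq_iterate, -FunLike.coe_pow_eq_iterate, hQ, hB.pow_apply hj,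
      hB.apply_eq_one, hB.pow_map_eq_zero hj]
  have hcompress : (k.comp Q).smulRight (Q y) = jordanWord r s N T := by
    ext z
    have hz : jordanWord r s B T (Q z) = k (Q z) • y := by rw [hT, smulRight_apply]
    simpa [-pow_apply_eq_iterate, -FunLike.coe_pow_eq_iterate, jordanWord, hBQ, hQB, hr, hs] using
      (congrArg Q hz).symm
  have hker : k (Q (Q y)) = 0 :=
    apply_self_eq_zero_of_isNilpotent (k := k.comp Q)
      (hcompress.symm ▸ isNilpotent_jordanWord hsr hN T)
  have hcorner : k e * h y = 2 * ξ ^ (r + s) * h (T e) := by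
    simpa [hT] using hB.apply_jordanWord_self r s T
  rw [← hcorner, ← sub_eq_zero, ← hker]
  simp [hQ, hB.apply_eq_one, mul_comm]

lemma apply_add_apply_eq_of_jordanWord_eq {l : StrongDual 𝕜 E} {x : E}
    (hB : IsRankOneSplitting B h e ξ N) (hr : r ≠ 0) (hN : N ^ r = 0)
    (hT : jordanWord r 0 B T = k.smulRight x + l.smulRight y) :
    k x + l y = 2 * ξ ^ r * h (T e) := by
  have hz (z : E) : ξ ^ r • (h z • T e + h (T z) • e) = k z • x + l z • y := by
    simpa [jordanWord, hB.pow_eq_smul hr hN, add_comm] using DFunLike.congr_fun hT z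
  have hsum : ∑ j, (![k, l, -ξ ^ r • h.comp T, -ξ ^ r • h] j).toLinearMap.smulRight
      (![x, y, e, T e] j) = 0 := by
    ext z
    simp only [Fin.sum_univ_four, LinearMap.add_apply, LinearMap.smulRight_apply, Matrix.cons_val]
    simp [← hz z, mul_smul]
  have htrace := sum_apply_eq_zero_of_sum_smulRight_eq_zero hsum
  simp only [Fin.sum_univ_four, Matrix.cons_val, coe_coe, smul_apply, comp_apply, smul_eq_mul]
    at htrace
  linear_combination htrace

end IsRankOneSplitting

end TraceIdentities

section Local

variable {𝕜 E : Type*} [NontriviallyNormedField 𝕜] [NormedAddCommGroup E]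
  [NormedSpace 𝕜 E] {A : Subalgebra 𝕜 (E →L[𝕜] E)}

/-- The hypothesis on `φ`, restricted to words with one factor `a` and all others equal to `b`:
if `a` or `b` has rank at most one, then on that word `φ` acts as a linear Jordan automorphism,
which may depend on `a` and `b`. -/
def LocallyPreservesJordanWord (φ : A → A) (r s : ℕ) : Prop :=
  ∀ a b : A, IsRankLEOne (a : E →L[𝕜] E) ∨ IsRankLEOne (b : E →L[𝕜] E) →
    ∃ θ : A ≃ₗ[𝕜] A, IsJordanHom θ ∧ jordanWord r s (φ b) (φ a) = θ (jordanWord r s b a)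

lemma LocallyPreservesJordanWord.symm {φ : A → A} {r s : ℕ}
    (hφ : LocallyPreservesJordanWord φ r s) : LocallyPreservesJordanWord φ s r :=
  fun a b hab => by simpa only [jordanWord_comm s r] using hφ a b hab

lemma locallyPreservesJordanWord_of_forall_prod {φ : A → A} {ι : Type*}
    {m : ℕ} (hm : 2 ≤ m) {i : Fin m → ι} {p : Fin m} (hp : ∀ q, q ≠ p → i q ≠ i p)
    (hφ : ∀ a : ι → A,
      (∃ j, LinearMap.rank ((a j : E →L[𝕜] E) : E →ₗ[𝕜] E) ≤ 1) →
      ∃ θ : A ≃ₗ[𝕜] A, IsJordanHom θ ∧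
        (List.ofFn fun j => φ (a (i j))).prod + (List.ofFn fun j => φ (a (i j))).reverse.prod =
          θ ((List.ofFn fun j => a (i j)).prod + (List.ofFn fun j => a (i j)).reverse.prod)) :
    LocallyPreservesJordanWord φ p (m - 1 - p) := by
  classical
  intro a b hab
  have hcomp : (fun j => Function.update (fun _ => b) (i p) a (i j)) =
      Function.update (fun _ => b) p a := by
    ext1 j
    rcases eq_or_ne j p with rfl | hj
    · simp
    · simp [hj, hp j hj]
  have hφcomp : (fun j => φ (Function.update (fun _ => b) (i p) a (i j))) =
      Function.update (fun _ => φ b) p (φ a) :=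
    (congrArg (φ ∘ ·) hcomp).trans (Function.comp_update φ (fun _ => b) p a)
  obtain ⟨θ, hθ, h⟩ := hφ (Function.update (fun _ => b) (i p) a) (by
    rcases hab with ⟨k, u, ha⟩ | ⟨k, u, hb⟩
    · exact ⟨i p, by simpa [ha] using rank_smulRight_le_one k u⟩
    · have : Nontrivial (Fin m) := Fin.nontrivial_iff_two_le.2 hm
      obtain ⟨q, hq⟩ := exists_ne p
      exact ⟨i q, by simpa [hp q hq, hb] using rank_smulRight_le_one k u⟩)
  rw [hcomp, hφcomp, prod_ofFn_update_add_reverse, prod_ofFn_update_add_reverse] at h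
  exact ⟨θ, hθ, h⟩

lemma pow_eq_of_coe_eq_smulRight {b : A} {f : StrongDual 𝕜 E} {x : E}
    (hb : (b : E →L[𝕜] E) = f.smulRight x) (hfx : f x = 1) {n : ℕ} (hn : n ≠ 0) : b ^ n = b := by
  have hidem : IsIdempotentElem b := by
    ext z
    simp [hb, hfx]
  exact hidem.pow_eq hn

variable [NeZero (2 : 𝕜)] [SeparatingDual 𝕜 E]

lemma IsJordanHom.exists_eq_smulRight (hA : ∀ (k : StrongDual 𝕜 E) u, k.smulRight u ∈ A)
    {θ : A ≃ₗ[𝕜] A} (hθ : IsJordanHom θ) {a : A} {f : StrongDual 𝕜 E} {x : E}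
    (ha : (a : E →L[𝕜] E) = f.smulRight x) :
    ∃ (k : StrongDual 𝕜 E) (u : E), (θ a : E →L[𝕜] E) = k.smulRight u ∧ k u = f x := by
  rcases eq_or_ne a 0 with rfl | ha0
  · have hfx : f x • x = 0 := by simpa using (DFunLike.congr_fun ha x).symm
    refine ⟨0, 0, by simp, ?_⟩
    simpa [eq_comm] using congrArg f hfx
  set c : E →L[𝕜] E := (θ a : E →L[𝕜] E) with hc
  obtain ⟨z, hz⟩ : ∃ z, c z ≠ 0 := by
    by_contra! hzero
    have : θ a = 0 := Subtype.ext (ContinuousLinearMap.ext hzero)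
    exact ha0 (by simpa using this)
  obtain ⟨g, hg⟩ := SeparatingDual.exists_eq_one (R := 𝕜) hz
  obtain ⟨b, hb⟩ := θ.surjective ⟨g.smulRight z, hA g z⟩
  have haa : a * a = f x • a := by
    ext w
    simp [ha, smul_smul, mul_comm]
  have haba : a * b * a = f ((b : E →L[𝕜] E) x) • a := by
    ext w
    simp [ha, smul_smul, mul_comm]
  have hcc (w : E) : c (c w) = f x • c w := by
    have h := hθ.map_mul_self (θ := θ.toLinearMap) a
    rw [haa, map_smul] at h
    exact (DFunLike.congr_fun (congrArg Subtype.val h) w).symm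
  have hcbc (w : E) : f ((b : E →L[𝕜] E) x) • c w = g (c w) • c z := by
    have h := hθ.map_mul_mul_self (θ := θ.toLinearMap) a b
    rw [haba, map_smul] at h
    simpa [← hc, hb] using DFunLike.congr_fun (congrArg Subtype.val h) w
  have hfbx : f ((b : E →L[𝕜] E) x) = 1 := by simpa [hg] using congrArg g (hcbc z)
  refine ⟨g.comp c, c z, ContinuousLinearMap.ext fun w => ?_, ?_⟩
  · simpa [hfbx] using hcbc w
  · simp [hcc, hg]

namespace LocallyPreservesJordanWord

variable {φ : A → A} {r s : ℕ} {f : StrongDual 𝕜 E} {x : E} {a b : A}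

lemma exists_pow_eq_smulRight (hφ : LocallyPreservesJordanWord φ r s)
    (hA : ∀ (k : StrongDual 𝕜 E) u, k.smulRight u ∈ A) (hb : (b : E →L[𝕜] E) = f.smulRight x)
    (hfx : f x = 1) :
    ∃ (h : StrongDual 𝕜 E) (e : E), h e = 1 ∧
      (φ b : E →L[𝕜] E) ^ (r + s + 1) = h.smulRight e := by
  obtain ⟨θ, hθ, h⟩ := hφ b b (.inr ⟨f, x, hb⟩)
  rw [jordanWord_self (𝕜 := 𝕜), jordanWord_self (𝕜 := 𝕜),
    pow_eq_of_coe_eq_smulRight hb hfx (by lia), map_smul] at h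
  obtain ⟨k, u, hku, hk⟩ := hθ.exists_eq_smulRight hA hb
  have hpow : φ b ^ (r + s + 1) = θ b := smul_right_injective A (two_ne_zero (α := 𝕜)) h
  exact ⟨k, u, hk.trans hfx, by rw [← hku, ← hpow, Subalgebra.coe_pow]⟩

lemma exists_jordanWord_eq_smulRight (hφ : LocallyPreservesJordanWord φ r s)
    (hA : ∀ (k : StrongDual 𝕜 E) u, k.smulRight u ∈ A) (hb : (b : E →L[𝕜] E) = f.smulRight x)
    (hfx : f x = 1) (hr : r ≠ 0) (hs : s ≠ 0) (a : A) :
    ∃ (k : StrongDual 𝕜 E) (y : E),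
      jordanWord r s (φ b : E →L[𝕜] E) (φ a : E →L[𝕜] E) = k.smulRight y ∧
        k y = 2 * f ((a : E →L[𝕜] E) x) := by
  obtain ⟨θ, hθ, h⟩ := hφ a b (.inr ⟨f, x, hb⟩)
  have hword : ((jordanWord r s b a : A) : E →L[𝕜] E) =
      f.smulRight ((2 * f ((a : E →L[𝕜] E) x)) • x) := by
    ext z
    simp [jordanWord, pow_eq_of_coe_eq_smulRight hb hfx, hr, hs, hb, two_mul, add_smul, smul_smul]
  obtain ⟨k, y, hky, htrace⟩ := hθ.exists_eq_smulRight hA hword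
  exact ⟨k, y, by rw [← hky, ← h, coe_jordanWord], by simpa [hfx] using htrace⟩

lemma exists_jordanWord_eq_smulRight_add (hφ : LocallyPreservesJordanWord φ r 0)
    (hA : ∀ (k : StrongDual 𝕜 E) u, k.smulRight u ∈ A) (hb : (b : E →L[𝕜] E) = f.smulRight x)
    (hfx : f x = 1) (hr : r ≠ 0) (a : A) :
    ∃ (k l : StrongDual 𝕜 E) (y z : E),
      jordanWord r 0 (φ b : E →L[𝕜] E) (φ a : E →L[𝕜] E) = k.smulRight y + l.smulRight z ∧
        k y + l z = 2 * f ((a : E →L[𝕜] E) x) := by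
  obtain ⟨θ, hθ, h⟩ := hφ a b (.inr ⟨f, x, hb⟩)
  have hba : (b * a : E →L[𝕜] E) = (f.comp (a : E →L[𝕜] E)).smulRight x := by
    ext z
    simp [hb]
  have hab : (a * b : E →L[𝕜] E) = f.smulRight ((a : E →L[𝕜] E) x) := by
    ext z
    simp [hb]
  obtain ⟨k, y, hky, hk⟩ := hθ.exists_eq_smulRight hA (a := b * a) hba
  obtain ⟨l, z, hlz, hl⟩ := hθ.exists_eq_smulRight hA (a := a * b) hab
  refine ⟨k, l, y, z, ?_, ?_⟩
  · rw [← hky, ← hlz, ← coe_jordanWord, h]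
    simp [jordanWord, pow_eq_of_coe_eq_smulRight hb hfx hr]
  · rw [hk, hl, two_mul, comp_apply]

lemma exists_forall_apply_eq (hφ : LocallyPreservesJordanWord φ r s)
    (hA : ∀ (k : StrongDual 𝕜 E) u, k.smulRight u ∈ A)
    (hrange : ∀ T : E →L[𝕜] E, LinearMap.rank T.toLinearMap ≤ 2 →
      ∃ a : A, (φ a : E →L[𝕜] E) = T)
    (hr : r ≠ 0) (hsr : s ≤ r) (hfx : f x = 1) :
    ∃ (k : StrongDual 𝕜 E) (u : E),
      (∀ a : A, k ((φ a : E →L[𝕜] E) u) = f ((a : E →L[𝕜] E) x)) ∧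
        k u ^ (r + s + 1) = 1 := by
  obtain ⟨h, e, he, hB⟩ := hφ.exists_pow_eq_smulRight hA (b := ⟨f.smulRight x, hA f x⟩) rfl hfx
  obtain ⟨ξ, N, hsplit, hξ, hN⟩ := exists_isRankOneSplitting_of_pow_eq (by lia) he hB
  have hξ0 : ξ ≠ 0 := by
    rintro rfl
    simp at hξ
  suffices hval : ∀ a : A,
      2 * ξ ^ (r + s) * h ((φ a : E →L[𝕜] E) e) = 2 * f ((a : E →L[𝕜] E) x) by
    refine ⟨ξ ^ (r + s) • h, e, fun a => ?_, ?_⟩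
    · exact mul_left_cancel₀ (two_ne_zero (α := 𝕜)) (by simpa [mul_assoc] using hval a)
    · simp [he, ← pow_mul, mul_comm (r + s), pow_mul ξ (r + s + 1), hξ]
  rcases eq_or_ne s 0 with rfl | hs
  · have himage := hφ.exists_jordanWord_eq_smulRight_add hA (b := ⟨f.smulRight x, hA f x⟩)
      rfl hfx hr
    have hN0 : N ^ r = 0 := by
      refine hsplit.pow_eq_zero_of_rank_le_two hξ0 hr hN fun T hT => ?_
      obtain ⟨a, rfl⟩ := hrange T hT
      obtain ⟨k, l, y, z, h, -⟩ := himage a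
      exact h ▸ rank_smulRight_add_smulRight_le_two k l y z
    intro a
    obtain ⟨k, l, y, z, h, htrace⟩ := himage a
    rw [← htrace, hsplit.apply_add_apply_eq_of_jordanWord_eq hr hN0 h, add_zero]
  · have himage := hφ.exists_jordanWord_eq_smulRight hA (b := ⟨f.smulRight x, hA f x⟩)
      rfl hfx hr hs
    have hN0 : N ^ (r + s) = 0 := by
      refine hsplit.pow_eq_zero_of_isRankLEOne hξ0 hs hsr hN fun T hT => ?_
      obtain ⟨a, rfl⟩ := hrange T hT
      obtain ⟨k, y, h, -⟩ := himage a
      exact ⟨k, y, h⟩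
    intro a
    obtain ⟨k, y, h, htrace⟩ := himage a
    rw [← htrace, hsplit.apply_eq_of_jordanWord_eq_smulRight hs hsr hN0 h]

lemma map_zero (hφ : LocallyPreservesJordanWord φ r s)
    (hrange : ∀ T : E →L[𝕜] E, LinearMap.rank T.toLinearMap ≤ 2 →
      ∃ a : A, (φ a : E →L[𝕜] E) = T) :
    φ 0 = 0 := by
  have hpair (f : StrongDual 𝕜 E) (x : E) (hfx : f x = 1) : f ((φ 0 : E →L[𝕜] E) x) = 0 := by
    obtain ⟨b, hb⟩ := hrange (f.smulRight x) ((rank_smulRight_le_one f x).trans one_le_two)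
    obtain ⟨θ, -, h⟩ := hφ 0 b (.inl ⟨0, 0, by simp⟩)
    have hsplit : IsRankOneSplitting (φ b : E →L[𝕜] E) f x 1 0 :=
      ⟨hfx, by simp [hb], by simp, by simp⟩
    have hword : jordanWord r s (φ b : E →L[𝕜] E) (φ 0 : E →L[𝕜] E) = 0 := by
      rw [← coe_jordanWord, h]
      simp [jordanWord]
    simpa [hword, two_ne_zero] using (hsplit.apply_jordanWord_self r s (φ 0 : E →L[𝕜] E)).symm
  refine Subtype.ext (ContinuousLinearMap.ext fun x => ?_)
  by_contra hx
  have hx0 : x ≠ 0 := by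
    rintro rfl
    simp at hx
  obtain ⟨f, hfx, hf⟩ := SeparatingDual.exists_eq_one_ne_zero_of_ne_zero_pair (R := 𝕜) hx0 hx
  exact hf (hpair f x hfx)

end LocallyPreservesJordanWord

end Local

section RankOneFamilies

variable {𝕜 E F : Type*} [NontriviallyNormedField 𝕜] [NormedAddCommGroup E] [NormedSpace 𝕜 E]
  [NormedAddCommGroup F] [NormedSpace 𝕜 F]

/-- The space `E′ ⊗ u` of operators whose range lies in the line of `u`. -/
noncomputable def dualTensor (𝕜 E : Type*) {F : Type*} [NontriviallyNormedField 𝕜]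
    [NormedAddCommGroup E] [NormedSpace 𝕜 E] [NormedAddCommGroup F] [NormedSpace 𝕜 F] (u : F) :
    Submodule 𝕜 (E →L[𝕜] F) :=
  ((smulRightL 𝕜 E F).flip u).range

/-- The space `k ⊗ F` of operators factoring through the functional `k`. -/
noncomputable def functionalTensor (F : Type*) [NormedAddCommGroup F] [NormedSpace 𝕜 F]
    (k : StrongDual 𝕜 E) : Submodule 𝕜 (E →L[𝕜] F) :=
  (smulRightL 𝕜 E F k).range

lemma mem_dualTensor_iff {N : E →L[𝕜] F} {u : F} :
    N ∈ dualTensor 𝕜 E u ↔ ∃ k : StrongDual 𝕜 E, N = k.smulRight u := by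
  simp only [eq_comm (a := N)]
  rfl

lemma mem_functionalTensor_iff {N : E →L[𝕜] F} {k : StrongDual 𝕜 E} :
    N ∈ functionalTensor F k ↔ ∃ u : F, N = k.smulRight u := by
  simp only [eq_comm (a := N)]
  rfl

lemma smulRight_mem_dualTensor {k : StrongDual 𝕜 E} {u v : F} (hu : u ≠ 0)
    (h : ¬ LinearIndependent 𝕜 ![u, v]) : k.smulRight v ∈ dualTensor 𝕜 E u := by
  rw [LinearIndependent.pair_iff' hu] at h
  push Not at h
  obtain ⟨c, rfl⟩ := h
  exact mem_dualTensor_iff.2 ⟨c • k, by ext; simp [smul_smul, mul_comm]⟩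

lemma smulRight_mem_functionalTensor {k l : StrongDual 𝕜 E} {u : F} (hk : k ≠ 0)
    (h : ¬ LinearIndependent 𝕜 ![k, l]) : l.smulRight u ∈ functionalTensor F k := by
  rw [LinearIndependent.pair_iff' hk] at h
  push Not at h
  obtain ⟨c, rfl⟩ := h
  exact mem_functionalTensor_iff.2 ⟨c • u, by ext; simp [smul_smul, mul_comm]⟩

lemma exists_apply_eq_zero_apply_ne_zero {k l : StrongDual 𝕜 E}
    (h : LinearIndependent 𝕜 ![k, l]) : ∃ z, k z = 0 ∧ l z ≠ 0 := by
  by_contra! hker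
  have hspan := mem_span_of_iInf_ker_le_ker (L := fun _ : Unit => k.toLinearMap)
    (K := l.toLinearMap) (by simpa [SetLike.le_def] using hker)
  rw [Set.range_const, Submodule.mem_span_singleton] at hspan
  obtain ⟨c, hc⟩ := hspan
  exact (LinearIndependent.pair_iff' (h.ne_zero 0)).1 h c
    (ContinuousLinearMap.ext fun z => LinearMap.congr_fun hc z)

lemma not_linearIndependent_pair_of_mem_span {K V : Type*} [Field K] [AddCommGroup V]
    [Module K V] {p u v : V} (hu : u ∈ Submodule.span K {p}) (hv : v ∈ Submodule.span K {p}) :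
    ¬ LinearIndependent K ![u, v] := by
  obtain ⟨c, rfl⟩ := Submodule.mem_span_singleton.1 hu
  obtain ⟨d, rfl⟩ := Submodule.mem_span_singleton.1 hv
  intro h
  have hc : -c = 0 :=
    (LinearIndependent.pair_iff.1 h d (-c) (by simp [smul_smul, mul_comm])).2
  exact h.ne_zero 0 (by simp [neg_eq_zero.1 hc])

lemma IsRankLEOne.not_linearIndependent_or {k l : StrongDual 𝕜 E} {u v : F}
    (h : IsRankLEOne (k.smulRight u + l.smulRight v)) :
    ¬ LinearIndependent 𝕜 ![k, l] ∨ ¬ LinearIndependent 𝕜 ![u, v] := by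
  obtain ⟨q, p, hqp⟩ := h
  refine or_iff_not_imp_left.2 fun hkl => ?_
  rw [not_not] at hkl
  obtain ⟨z, hkz, hlz⟩ := exists_apply_eq_zero_apply_ne_zero hkl
  have hlk : LinearIndependent 𝕜 ![l, k] := LinearIndependent.pair_symm_iff.1 hkl
  obtain ⟨w, hlw, hkw⟩ := exists_apply_eq_zero_apply_ne_zero hlk
  have hv : l z • v = q z • p := by simpa [hkz] using DFunLike.congr_fun hqp z
  have hu : k w • u = q w • p := by simpa [hlw] using DFunLike.congr_fun hqp w
  refine not_linearIndependent_pair_of_mem_span (p := p) ?_ ?_ <;>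
    rw [Submodule.mem_span_singleton]
  · exact ⟨(k w)⁻¹ * q w, by rw [mul_smul, ← hu, inv_smul_smul₀ hkw]⟩
  · exact ⟨(l z)⁻¹ * q z, by rw [mul_smul, ← hv, inv_smul_smul₀ hlz]⟩

section Linear

variable {Y : Type*} [AddCommGroup Y] [Module 𝕜 Y]

lemma forall_mem_or_forall_mem_of_forall_mem_or {G : Type*} [AddCommGroup G] [Module 𝕜 G]
    {S T : Submodule 𝕜 G} {M N : Y →ₗ[𝕜] G} (h : ∀ y, M y ∈ S ∨ N y ∈ T) :
    (∀ y, M y ∈ S) ∨ ∀ y, N y ∈ T := by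
  have hcover : ((⊤ : Submodule 𝕜 Y) : Set Y) ⊆ S.comap M ∪ T.comap N := fun y _ => h y
  rw [AddSubgroupClass.subset_union] at hcover
  exact hcover.imp (fun hS y => hS trivial) (fun hT y => hT trivial)

lemma exists_forall_mem_dualTensor_or_functionalTensor {M : Y →ₗ[𝕜] E →L[𝕜] F}
    (hM : ∀ y, IsRankLEOne (M y)) :
    (∃ u, ∀ y, M y ∈ dualTensor 𝕜 E u) ∨ ∃ k, ∀ y, M y ∈ functionalTensor F k := by
  by_cases h0 : ∀ y, M y = 0
  · exact .inl ⟨0, fun y => h0 y ▸ Submodule.zero_mem _⟩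
  push Not at h0
  obtain ⟨y₀, hy₀⟩ := h0
  obtain ⟨k₀, u₀, h₀⟩ := hM y₀
  have hk₀ : k₀ ≠ 0 := by
    rintro rfl
    exact hy₀ (by rw [h₀]; ext; simp)
  have hu₀ : u₀ ≠ 0 := by
    rintro rfl
    exact hy₀ (by rw [h₀]; ext; simp)
  refine (forall_mem_or_forall_mem_of_forall_mem_or (M := M) (N := M)
    (S := dualTensor 𝕜 E u₀) (T := functionalTensor F k₀) fun y => ?_).imp
    (fun h => ⟨u₀, h⟩) (fun h => ⟨k₀, h⟩)
  obtain ⟨k, u, h⟩ := hM y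
  have hsum : IsRankLEOne (k₀.smulRight u₀ + k.smulRight u) := by
    rw [← h₀, ← h, ← map_add]
    exact hM _
  rw [h]
  exact hsum.not_linearIndependent_or.symm.imp (smulRight_mem_dualTensor hu₀)
    (smulRight_mem_functionalTensor hk₀)

end Linear

section Bilinear

variable {X Y : Type*} [AddCommGroup X] [Module 𝕜 X] [AddCommGroup Y] [Module 𝕜 Y]

lemma exists_forall_mem_dualTensor_or_functionalTensor_of_forall_add {M N : Y →ₗ[𝕜] E →L[𝕜] F}
    {k : StrongDual 𝕜 E} {u : F} (hM : ∀ y, M y ∈ functionalTensor F k)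
    (hN : ∀ y, N y ∈ dualTensor 𝕜 E u) (hadd : ∀ y, IsRankLEOne (M y + N y)) :
    (∃ v, ∀ y, M y ∈ dualTensor 𝕜 E v) ∨ ∃ l, ∀ y, N y ∈ functionalTensor F l := by
  simp only [mem_functionalTensor_iff, mem_dualTensor_iff] at hM hN
  choose w hw using hM
  choose l hl using hN
  rcases eq_or_ne k 0 with rfl | hk
  · exact .inl ⟨0, fun y => mem_dualTensor_iff.2 ⟨0, by rw [hw]; ext; simp⟩⟩
  rcases eq_or_ne u 0 with rfl | hu
  · exact .inr ⟨0, fun y => mem_functionalTensor_iff.2 ⟨0, by rw [hl]; ext; simp⟩⟩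
  refine (forall_mem_or_forall_mem_of_forall_mem_or (M := M) (N := N)
    (S := dualTensor 𝕜 E u) (T := functionalTensor F k) fun y => ?_).imp
    (fun h => ⟨u, h⟩) (fun h => ⟨k, h⟩)
  have h := hadd y
  rw [hw, hl] at h ⊢
  exact h.not_linearIndependent_or.symm.imp
    (fun h => smulRight_mem_dualTensor hu (h ∘ LinearIndependent.pair_symm_iff.1))
    (smulRight_mem_functionalTensor hk)

lemma forall_exists_mem_dualTensor_or_functionalTensor {M : X →ₗ[𝕜] Y →ₗ[𝕜] E →L[𝕜] F}
    (hM : ∀ x y, IsRankLEOne (M x y)) :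
    (∀ x, ∃ u, ∀ y, M x y ∈ dualTensor 𝕜 E u) ∨
      ∀ x, ∃ k, ∀ y, M x y ∈ functionalTensor F k := by
  by_contra! ⟨⟨x, hx⟩, x', hx'⟩
  obtain ⟨k, hk⟩ := (exists_forall_mem_dualTensor_or_functionalTensor (hM x)).resolve_left
    (by simpa using hx)
  obtain ⟨u, hu⟩ := (exists_forall_mem_dualTensor_or_functionalTensor (hM x')).resolve_right
    (by simpa using hx')
  rcases exists_forall_mem_dualTensor_or_functionalTensor_of_forall_add hk hu
    (fun y => by simpa using hM (x + x') y) with ⟨v, hv⟩ | ⟨l, hl⟩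
  · obtain ⟨y, hy⟩ := hx v
    exact hy (hv y)
  · obtain ⟨y, hy⟩ := hx' l
    exact hy (hl y)

lemma exists_forall_eq_smul_of_mem_span {T U : X →ₗ[𝕜] F} (hU : Function.Injective U)
    (hT : ∀ x, T x ∈ Submodule.span 𝕜 {U x}) : ∃ c : 𝕜, ∀ x, T x = c • U x := by
  simp only [Submodule.mem_span_singleton] at hT
  let e := LinearEquiv.ofInjective U hU
  have hmem (x : X) : T x ∈ LinearMap.range U := by
    obtain ⟨c, hc⟩ := hT x
    exact ⟨c • x, by rw [map_smul, hc]⟩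
  let f : X →ₗ[𝕜] X := e.symm.toLinearMap ∘ₗ T.codRestrict _ hmem
  have hf (x : X) : U (f x) = T x := congrArg Subtype.val (e.apply_symm_apply ⟨T x, hmem x⟩)
  obtain ⟨c, hc⟩ := f.exists_eq_smul_id_of_forall_notLinearIndependent fun x hx => by
    obtain ⟨c, hc⟩ := hT x
    have hx0 : x ≠ 0 := hx.ne_zero 0
    exact (LinearIndependent.pair_iff' hx0).1 hx c (hU (by rw [map_smul, hc, hf]))
  exact ⟨c, fun x => by rw [← hf, hc]; simp⟩

lemma exists_forall_eq_smulRight [SeparatingDual 𝕜 F] {M : X →ₗ[𝕜] Y →ₗ[𝕜] E →L[𝕜] F}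
    (hM : ∀ x, ∃ u, ∀ y, M x y ∈ dualTensor 𝕜 E u) {y₀ : Y} {z₀ : E}
    (hinj : ∀ x, M x y₀ z₀ = 0 → x = 0) :
    ∃ (U : X →ₗ[𝕜] F) (V : Y →ₗ[𝕜] StrongDual 𝕜 E), ∀ x y, M x y = (V y).smulRight (U x) := by
  by_cases hX : ∀ x : X, x = 0
  · exact ⟨0, 0, fun x y => by rw [hX x]; ext; simp⟩
  push Not at hX
  obtain ⟨x₀, hx₀⟩ := hX
  obtain ⟨g, hg⟩ := SeparatingDual.exists_eq_one (R := 𝕜) (hx₀ ∘ hinj x₀)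
  let ev (y : Y) (z : E) : X →ₗ[𝕜] F := (apply 𝕜 F z).toLinearMap ∘ₗ M.flip y
  have hspan (y : Y) (z : E) (x : X) : ev y z x ∈ Submodule.span 𝕜 {ev y₀ z₀ x} := by
    by_cases hx : M x y₀ z₀ = 0
    · simp [hinj x hx]
    obtain ⟨u, hu⟩ := hM x
    obtain ⟨k, hk⟩ := mem_dualTensor_iff.1 (hu y)
    obtain ⟨k₀, hk₀⟩ := mem_dualTensor_iff.1 (hu y₀)
    have hk₀z : k₀ z₀ ≠ 0 := by
      contrapose! hx
      simp [hk₀, hx]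
    refine Submodule.mem_span_singleton.2 ⟨k z / k₀ z₀, ?_⟩
    simp [ev, hk, hk₀, smul_smul, hk₀z]
  have hU : Function.Injective (ev y₀ z₀) := (injective_iff_map_eq_zero _).2 hinj
  refine ⟨ev y₀ z₀, (compL 𝕜 E F 𝕜 g).toLinearMap ∘ₗ M x₀, fun x y => ?_⟩
  ext z
  obtain ⟨c, hc⟩ := exists_forall_eq_smul_of_mem_span hU (hspan y z)
  have hcx (x : X) : M x y z = c • M x y₀ z₀ := hc x
  simp [ev, hcx, hg]

end Bilinear

end RankOneFamilies

section Classification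

variable {𝕜 E F X Y : Type*} [NontriviallyNormedField 𝕜] [NormedAddCommGroup E]
  [NormedSpace 𝕜 E] [NormedAddCommGroup F] [NormedSpace 𝕜 F]

lemma dualTensor_le_dualTensor {u v : F} {N : E →L[𝕜] F} (hN : N ≠ 0)
    (hu : N ∈ dualTensor 𝕜 E u) (hv : N ∈ dualTensor 𝕜 E v) :
    dualTensor 𝕜 E u ≤ dualTensor 𝕜 E v := by
  obtain ⟨z, hz⟩ : ∃ z, N z ≠ 0 := by
    by_contra! hzero
    exact hN (ContinuousLinearMap.ext hzero)
  have hspan {w : F} (hw : N ∈ dualTensor 𝕜 E w) : w ≠ 0 ∧ w ∈ Submodule.span 𝕜 {N z} := by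
    obtain ⟨k, rfl⟩ := mem_dualTensor_iff.1 hw
    rw [smulRight_apply, smul_ne_zero_iff] at hz
    exact ⟨hz.2, Submodule.mem_span_singleton.2 ⟨(k z)⁻¹, inv_smul_smul₀ hz.1 w⟩⟩
  intro T hT
  obtain ⟨k, rfl⟩ := mem_dualTensor_iff.1 hT
  exact smulRight_mem_dualTensor (hspan hv).1
    (not_linearIndependent_pair_of_mem_span (hspan hv).2 (hspan hu).2)

lemma functionalTensor_le_functionalTensor {k l : StrongDual 𝕜 E} {N : E →L[𝕜] F} (hN : N ≠ 0)
    (hk : N ∈ functionalTensor F k) (hl : N ∈ functionalTensor F l) :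
    functionalTensor F k ≤ functionalTensor F l := by
  obtain ⟨u, hu⟩ := mem_functionalTensor_iff.1 hk
  obtain ⟨v, hv⟩ := mem_functionalTensor_iff.1 hl
  have hu0 : u ≠ 0 := by
    rintro rfl
    exact hN (by rw [hu]; ext; simp)
  have hl0 : l ≠ 0 := by
    rintro rfl
    exact hN (by rw [hv]; ext; simp)
  intro T hT
  obtain ⟨w, rfl⟩ := mem_functionalTensor_iff.1 hT
  refine smulRight_mem_functionalTensor hl0 fun hlk => ?_
  obtain ⟨z, hlz, hkz⟩ := exists_apply_eq_zero_apply_ne_zero hlk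
  have huv : k z • u = l z • v := by simpa [hu] using DFunLike.congr_fun hv z
  simp [hlz, hkz, hu0] at huv

variable [AddCommGroup X] [Module 𝕜 X] [AddCommGroup Y] [Module 𝕜 Y]

lemma exists_forall_forall_mem [Nontrivial X] {G ι : Type*} [AddCommGroup G] [Module 𝕜 G]
    {S : ι → Submodule 𝕜 G} (hS : ∀ i j N, N ≠ 0 → N ∈ S i → N ∈ S j → S i ≤ S j)
    {M : X →ₗ[𝕜] Y →ₗ[𝕜] G} (hM : ∀ x y, M x y = 0 → x = 0 ∨ y = 0)
    (hX : ∀ x, ∃ i, ∀ y, M x y ∈ S i) (hY : ∀ y, ∃ i, ∀ x, M x y ∈ S i) :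
    ∃ i, ∀ x y, M x y ∈ S i := by
  obtain ⟨x₀, hx₀⟩ := exists_ne (0 : X)
  obtain ⟨i, hi⟩ := hX x₀
  refine ⟨i, fun x y => ?_⟩
  rcases eq_or_ne y 0 with rfl | hy
  · simp
  obtain ⟨j, hj⟩ := hY y
  have hne : M x₀ y ≠ 0 := fun h => (hM x₀ y h).elim hx₀ hy
  exact hS j i _ hne (hj x₀) (hi y) (hj x)

lemma exists_forall_eq_smulRight_of_ne_zero [SeparatingDual 𝕜 F] [Nontrivial X] [Nontrivial Y]
    {M : X →ₗ[𝕜] Y →ₗ[𝕜] E →L[𝕜] F} (hM : ∀ x y, M x y = 0 → x = 0 ∨ y = 0)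
    (hX : ∀ x, ∃ u, ∀ y, M x y ∈ dualTensor 𝕜 E u)
    (hY : ∀ y, ∃ k, ∀ x, M x y ∈ functionalTensor F k) :
    ∃ (U : X →ₗ[𝕜] F) (V : Y →ₗ[𝕜] StrongDual 𝕜 E), ∀ x y, M x y = (V y).smulRight (U x) := by
  obtain ⟨x₀, hx₀⟩ := exists_ne (0 : X)
  obtain ⟨y₀, hy₀⟩ := exists_ne (0 : Y)
  obtain ⟨k, hk⟩ := hY y₀
  obtain ⟨z, hz⟩ : ∃ z, M x₀ y₀ z ≠ 0 := by
    by_contra! hzero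
    exact (hM x₀ y₀ (ContinuousLinearMap.ext hzero)).elim hx₀ hy₀
  simp only [mem_functionalTensor_iff] at hk
  choose w hw using hk
  have hkz : k z ≠ 0 := by
    contrapose! hz
    simp [hw, hz]
  refine exists_forall_eq_smulRight hX (y₀ := y₀) (z₀ := z) fun x hx => ?_
  have hwx : w x = 0 := by simpa [hw, hkz] using hx
  exact (hM x y₀ (by rw [hw, hwx]; ext; simp)).resolve_right hy₀

section RankLEOne

lemma not_linearIndependent_pair_of_rank_le_one (hF : Module.rank 𝕜 F ≤ 1) (u v : F) :
    ¬ LinearIndependent 𝕜 ![u, v] := by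
  obtain ⟨p, hp⟩ := rank_le_one_iff.1 hF
  exact not_linearIndependent_pair_of_mem_span (p := p)
    (Submodule.mem_span_singleton.2 (hp u)) (Submodule.mem_span_singleton.2 (hp v))

lemma IsRankLEOne.mem_dualTensor (hF : Module.rank 𝕜 F ≤ 1) {N : E →L[𝕜] F} {u : F}
    (hu : u ≠ 0) (hN : IsRankLEOne N) : N ∈ dualTensor 𝕜 E u := by
  obtain ⟨k, v, rfl⟩ := hN
  exact smulRight_mem_dualTensor hu (not_linearIndependent_pair_of_rank_le_one hF u v)

lemma IsRankLEOne.mem_functionalTensor (hE : Module.rank 𝕜 E ≤ 1) {N : E →L[𝕜] F}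
    {k : StrongDual 𝕜 E} (hk : k ≠ 0) (hN : IsRankLEOne N) : N ∈ functionalTensor F k := by
  obtain ⟨l, v, rfl⟩ := hN
  refine smulRight_mem_functionalTensor hk fun hkl => ?_
  obtain ⟨z, hkz, hlz⟩ := exists_apply_eq_zero_apply_ne_zero hkl
  obtain ⟨w, hkw⟩ : ∃ w, k w ≠ 0 := by
    by_contra! hzero
    exact hk (ContinuousLinearMap.ext hzero)
  refine not_linearIndependent_pair_of_rank_le_one hE z w (LinearIndependent.pair_iff.2 ?_)
  intro s t hst
  have ht : t = 0 := by simpa [hkz, hkw] using congrArg k hst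
  have hs : s = 0 := by simpa [ht, hlz] using congrArg l hst
  exact ⟨hs, ht⟩

end RankLEOne

section Endomorphisms

variable [SeparatingDual 𝕜 E] [Nontrivial E] {M : X →ₗ[𝕜] Y →ₗ[𝕜] E →L[𝕜] E}

lemma rank_le_one_of_forall_mem_dualTensor
    (hsep : ∀ (g : StrongDual 𝕜 E) z, (∀ x y, g (M x y z) = 0) → g = 0 ∨ z = 0) {u : E}
    (hM : ∀ x y, M x y ∈ dualTensor 𝕜 E u) : Module.rank 𝕜 E ≤ 1 := by
  obtain ⟨e, he⟩ := exists_ne (0 : E)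
  have hzero (g : StrongDual 𝕜 E) (hg : g u = 0) : g = 0 := by
    refine (hsep g e fun x y => ?_).resolve_right he
    obtain ⟨k, hk⟩ := mem_dualTensor_iff.1 (hM x y)
    simp [hk, hg]
  have hu : u ≠ 0 := by
    rintro rfl
    obtain ⟨g, hg⟩ := SeparatingDual.exists_eq_one (R := 𝕜) he
    simp [hzero g (map_zero g)] at hg
  obtain ⟨g, hg⟩ := SeparatingDual.exists_eq_one (R := 𝕜) hu
  refine rank_le_one_iff.2 ⟨u, fun v => ⟨g v, ?_⟩⟩
  refine (SeparatingDual.eq_iff_forall_dual_eq (R := 𝕜)).2 fun h => ?_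
  have hh : h - h u • g = 0 := hzero _ (by simp [hg])
  simpa [mul_comm] using (DFunLike.congr_fun (sub_eq_zero.1 hh) v).symm

lemma rank_le_one_of_forall_mem_functionalTensor
    (hsep : ∀ (g : StrongDual 𝕜 E) z, (∀ x y, g (M x y z) = 0) → g = 0 ∨ z = 0)
    {k : StrongDual 𝕜 E} (hM : ∀ x y, M x y ∈ functionalTensor E k) : Module.rank 𝕜 E ≤ 1 := by
  obtain ⟨e, he⟩ := exists_ne (0 : E)
  obtain ⟨g, hg⟩ := SeparatingDual.exists_eq_one (R := 𝕜) he
  have hg0 : g ≠ 0 := by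
    rintro rfl
    simp at hg
  have hinj : Function.Injective k.toLinearMap := by
    refine (injective_iff_map_eq_zero _).2 fun z hz => (hsep g z fun x y => ?_).resolve_left hg0
    obtain ⟨u, hu⟩ := mem_functionalTensor_iff.1 (hM x y)
    have hkz : k z = 0 := hz
    simp [hu, hkz]
  have hke : k e ≠ 0 := fun h => he (hinj (by simpa using h))
  exact rank_le_one_iff.2 ⟨e, fun v => ⟨k v / k e, hinj (by simp [hke])⟩⟩

theorem exists_forall_eq_smulRight_or_flip [Nontrivial X] [Nontrivial Y]
    (hrank : ∀ x y, IsRankLEOne (M x y)) (hM : ∀ x y, M x y = 0 → x = 0 ∨ y = 0)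
    (hsep : ∀ (g : StrongDual 𝕜 E) z, (∀ x y, g (M x y z) = 0) → g = 0 ∨ z = 0) :
    (∃ (U : X →ₗ[𝕜] E) (V : Y →ₗ[𝕜] StrongDual 𝕜 E), ∀ x y, M x y = (V y).smulRight (U x)) ∨
      ∃ (U : Y →ₗ[𝕜] E) (V : X →ₗ[𝕜] StrongDual 𝕜 E), ∀ x y, M x y = (V x).smulRight (U y) := by
  obtain ⟨e, he⟩ := exists_ne (0 : E)
  obtain ⟨g, hg⟩ := SeparatingDual.exists_eq_one (R := 𝕜) he
  have hg0 : g ≠ 0 := by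
    rintro rfl
    simp at hg
  have hflip (x : Y) (y : X) : M.flip x y = 0 → x = 0 ∨ y = 0 := fun h => (hM y x h).symm
  rcases forall_exists_mem_dualTensor_or_functionalTensor hrank with hX | hX <;>
    rcases forall_exists_mem_dualTensor_or_functionalTensor (M := M.flip)
      (fun y x => hrank x y) with hY | hY
  · obtain ⟨u, hu⟩ := exists_forall_forall_mem (fun _ _ _ => dualTensor_le_dualTensor) hM hX hY
    have hdim := rank_le_one_of_forall_mem_dualTensor hsep hu
    exact .inl (exists_forall_eq_smulRight_of_ne_zero hM hX
      fun y => ⟨g, fun x => (hrank x y).mem_functionalTensor hdim hg0⟩)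
  · exact .inl (exists_forall_eq_smulRight_of_ne_zero hM hX hY)
  · obtain ⟨U, V, h⟩ := exists_forall_eq_smulRight_of_ne_zero hflip hY hX
    exact .inr ⟨U, V, fun x y => h y x⟩
  · obtain ⟨k, hk⟩ := exists_forall_forall_mem
      (fun _ _ _ => functionalTensor_le_functionalTensor) hM hX hY
    have hdim := rank_le_one_of_forall_mem_functionalTensor hsep hk
    exact .inl (exists_forall_eq_smulRight_of_ne_zero hM
      (fun x => ⟨e, fun y => (hrank x y).mem_dualTensor hdim he⟩) hY)

end Endomorphisms

end Classification

section TraceTranspose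

variable {𝕜 E : Type*} [NontriviallyNormedField 𝕜] [NormedAddCommGroup E]
  [NormedSpace 𝕜 E] {A : Subalgebra 𝕜 (E →L[𝕜] E)}

/-- `M` is a transpose of `φ` for the trace pairing: `M x f` has rank at most one and
`tr (φ a * M x f) = f (a x) = tr (a * (f ⊗ x))`, up to an `m`-th root of unity also for `a = 1`.
The trace of `k ⊗ u` is written as `k u`. -/
structure IsTraceTranspose (φ : A → A) (m : ℕ)
    (M : E →ₗ[𝕜] StrongDual 𝕜 E →ₗ[𝕜] E →L[𝕜] E) : Prop where
  isRankLEOne : ∀ x f, IsRankLEOne (M x f)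
  apply_eq : ∀ {x f} {k : StrongDual 𝕜 E} {u}, M x f = k.smulRight u → ∀ a : A,
    k ((φ a : E →L[𝕜] E) u) = f ((a : E →L[𝕜] E) x)
  pow_eq : ∀ {x f} {k : StrongDual 𝕜 E} {u}, M x f = k.smulRight u → f x ≠ 0 → k u ^ m = f x ^ m

variable {φ : A → A} {m : ℕ}

namespace IsTraceTranspose

variable {M : E →ₗ[𝕜] StrongDual 𝕜 E →ₗ[𝕜] E →L[𝕜] E}

variable [SeparatingDual 𝕜 E]

lemma eq_zero_or_eq_zero (hM : IsTraceTranspose φ m M)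
    (hA : ∀ (k : StrongDual 𝕜 E) u, k.smulRight u ∈ A) (x : E) (f : StrongDual 𝕜 E)
    (h : M x f = 0) : x = 0 ∨ f = 0 := by
  by_contra! hne
  obtain ⟨g, hg⟩ := SeparatingDual.exists_eq_one (R := 𝕜) hne.1
  refine hne.2 (ContinuousLinearMap.ext fun y => ?_)
  have hM0 : M x f = (0 : StrongDual 𝕜 E).smulRight (0 : E) := by simp [h]
  simpa [hg] using (hM.apply_eq hM0 ⟨g.smulRight y, hA g y⟩).symm

lemma eq_zero_or_eq_zero_of_forall_apply (hM : IsTraceTranspose φ m M) (hφ0 : φ 0 = 0)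
    (hrange : ∀ (g : StrongDual 𝕜 E) y, ∃ a : A, (φ a : E →L[𝕜] E) = g.smulRight y)
    (g : StrongDual 𝕜 E) (z : E) (h : ∀ x f, g (M x f z) = 0) : g = 0 ∨ z = 0 := by
  obtain ⟨a, ha⟩ := hrange g z
  have ha0 : a = 0 := by
    refine Subtype.ext (ContinuousLinearMap.ext fun x => ?_)
    refine (SeparatingDual.eq_iff_forall_dual_eq (R := 𝕜)).2 fun f => ?_
    obtain ⟨k, u, hku⟩ := hM.isRankLEOne x f
    have hku0 : k z * g u = 0 := by simpa [hku] using h x f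
    rw [← hM.apply_eq hku a, ha, smulRight_apply, map_smul, smul_eq_mul, mul_comm, hku0]
    simp
  have hgz : g.smulRight z = 0 := by rw [← ha, ha0, hφ0, Subalgebra.coe_zero]
  refine or_iff_not_imp_right.2 fun hz => ContinuousLinearMap.ext fun y => ?_
  simpa [hz] using DFunLike.congr_fun hgz y

end IsTraceTranspose

lemma apply_smulRight_apply_eq {f k g : StrongDual 𝕜 E} {x u y : E} {a : A}
    (h : ∀ a : A, k ((φ a : E →L[𝕜] E) u) = f ((a : E →L[𝕜] E) x))
    (ha : (φ a : E →L[𝕜] E) = g.smulRight y) :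
    g (k.smulRight u y) = f ((a : E →L[𝕜] E) x) := by
  simp [← h, ha, mul_comm]

section Existence

variable (hφ : ∀ (f : StrongDual 𝕜 E) x, f x = 1 → ∃ (k : StrongDual 𝕜 E) (u : E),
  (∀ a : A, k ((φ a : E →L[𝕜] E) u) = f ((a : E →L[𝕜] E) x)) ∧ k u ^ m = 1)

include hφ

lemma exists_forall_apply_eq_of_apply_ne_zero {f : StrongDual 𝕜 E} {x : E} (hfx : f x ≠ 0) :
    ∃ (k : StrongDual 𝕜 E) (u : E),
      (∀ a : A, k ((φ a : E →L[𝕜] E) u) = f ((a : E →L[𝕜] E) x)) ∧ k u ^ m = f x ^ m := by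
  obtain ⟨k, u, hku, hpow⟩ := hφ ((f x)⁻¹ • f) x (by simp [hfx])
  refine ⟨f x • k, u, fun a => ?_, by simp [mul_pow, hpow]⟩
  simp [hku, hfx]

variable [SeparatingDual 𝕜 E]
  (hrange : ∀ (g : StrongDual 𝕜 E) y, ∃ a : A, (φ a : E →L[𝕜] E) = g.smulRight y)

include hrange

lemma exists_forall_apply_eq_of_apply_eq_zero {f : StrongDual 𝕜 E} {x : E} (hfx : f x = 0) :
    ∃ (k : StrongDual 𝕜 E) (u : E),
      ∀ a : A, k ((φ a : E →L[𝕜] E) u) = f ((a : E →L[𝕜] E) x) := by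
  rcases eq_or_ne x 0 with rfl | hx
  · exact ⟨0, 0, by simp⟩
  obtain ⟨f', hf'⟩ := SeparatingDual.exists_eq_one (R := 𝕜) hx
  have hvalue (t : 𝕜) (ht : t ≠ 0) :=
    exists_forall_apply_eq_of_apply_ne_zero hφ (f := f + t • f') (x := x) (by simp [hfx, hf', ht])
  obtain ⟨k₁, u₁, h₁, -⟩ := hvalue 1 one_ne_zero
  obtain ⟨k₂, u₂, h₂, -⟩ :=
    exists_forall_apply_eq_of_apply_ne_zero hφ (f := f') (x := x) (by simp [hf'])
  obtain ⟨k, u, hku⟩ := isRankLEOne_of_forall_add_smul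
      (N₀ := k₁.smulRight u₁ - k₂.smulRight u₂) (N₁ := k₂.smulRight u₂) fun t ht => by
    obtain ⟨k₃, u₃, h₃, -⟩ := hvalue t ht
    refine ⟨k₃, u₃, ContinuousLinearMap.ext fun y => ?_⟩
    refine (SeparatingDual.eq_iff_forall_dual_eq (R := 𝕜)).2 fun g => ?_
    obtain ⟨a, ha⟩ := hrange g y
    rw [apply_smulRight_apply_eq h₃ ha, add_apply, sub_apply, smul_apply, map_add, map_sub,
      map_smul, apply_smulRight_apply_eq h₁ ha, apply_smulRight_apply_eq h₂ ha]
    simp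
  refine ⟨k, u, fun a => ?_⟩
  have hsum := apply_apply_add_apply_apply_eq_of_smulRight_add_eq (k := k) (u := u) (l := k₂)
    (v := u₂) (k' := k₁) (u' := u₁) (by rw [← hku, sub_add_cancel]) (φ a : E →L[𝕜] E)
  rw [h₁, h₂] at hsum
  simpa using hsum

lemma exists_isTraceTranspose :
    ∃ M : E →ₗ[𝕜] StrongDual 𝕜 E →ₗ[𝕜] E →L[𝕜] E, IsTraceTranspose φ m M := by
  have hex (x : E) (f : StrongDual 𝕜 E) : ∃ (k : StrongDual 𝕜 E) (u : E),
      (∀ a : A, k ((φ a : E →L[𝕜] E) u) = f ((a : E →L[𝕜] E) x)) ∧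
        (f x ≠ 0 → k u ^ m = f x ^ m) := by
    by_cases hfx : f x = 0
    · obtain ⟨k, u, h⟩ := exists_forall_apply_eq_of_apply_eq_zero hφ hrange hfx
      exact ⟨k, u, h, fun hne => (hne hfx).elim⟩
    · obtain ⟨k, u, h, hpow⟩ := exists_forall_apply_eq_of_apply_ne_zero hφ hfx
      exact ⟨k, u, h, fun _ => hpow⟩
  choose k u hku hpow using hex
  choose c hc using hrange
  have hext {N N' : E →L[𝕜] E} (h : ∀ (g : StrongDual 𝕜 E) y, g (N y) = g (N' y)) : N = N' :=
    ContinuousLinearMap.ext fun y =>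
      (SeparatingDual.eq_iff_forall_dual_eq (R := 𝕜)).2 fun g => h g y
  have hpair (x f) (g : StrongDual 𝕜 E) (y : E) :
      g ((k x f).smulRight (u x f) y) = f ((c g y : E →L[𝕜] E) x) :=
    apply_smulRight_apply_eq (hku x f) (hc g y)
  refine ⟨LinearMap.mk₂ 𝕜 (fun x f => (k x f).smulRight (u x f)) ?_ ?_ ?_ ?_,
    fun x f => ⟨k x f, u x f, rfl⟩, fun {x f l v} hlv a => ?_, fun {x f l v} hlv hfx => ?_⟩
  · exact fun x x' f => hext fun g y => by simp only [hpair, add_apply, map_add]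
  · exact fun t x f => hext fun g y => by simp only [hpair, smul_apply, map_smul]
  · exact fun x f f' => hext fun g y => by simp only [hpair, add_apply, map_add]
  · exact fun t x f => hext fun g y => by simp only [hpair, smul_apply, map_smul]
  · rw [← hku x f a]
    exact (apply_apply_eq_of_smulRight_eq hlv (φ a : E →L[𝕜] E)).symm
  · rw [← hpow x f hfx]
    exact congrArg (· ^ m) (apply_apply_eq_of_smulRight_eq hlv 1).symm

end Existence

end TraceTranspose

section ScalarMultiple

lemma exists_forall_apply_eq_mul_of_pow_eq {𝕜 Z X : Type*} [Field 𝕜] [AddCommGroup Z]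
    [Module 𝕜 Z] [AddCommGroup X] [Module 𝕜 X] [Nontrivial X] {B β : Z →ₗ[𝕜] X →ₗ[𝕜] 𝕜}
    (hB : B.SeparatingRight) {m : ℕ} (hm : m ≠ 0)
    (h : ∀ z x, B z x ≠ 0 → β z x ^ m = B z x ^ m) :
    ∃ ζ : 𝕜, ζ ^ m = 1 ∧ ∀ z x, β z x = ζ * B z x := by
  have hone {x : X} (hx : x ≠ 0) : ∃ z, B z x = 1 := by
    obtain ⟨z, hz⟩ : ∃ z, B z x ≠ 0 := by
      by_contra! hzero
      exact hx (hB x hzero)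
    exact ⟨(B z x)⁻¹ • z, by simp [hz]⟩
  have hzero (z : Z) (x : X) (hzx : B z x = 0) : β z x = 0 := by
    rcases eq_or_ne x 0 with rfl | hx
    · simp
    obtain ⟨z', hz'⟩ := hone hx
    by_contra hβ
    have hpow := h (z' - (β z' x / β z x) • z) x (by simp [hzx, hz'])
    simp [hzx, hz', hβ, hm] at hpow
  obtain ⟨x₀, hx₀⟩ := exists_ne (0 : X)
  obtain ⟨z₀, hz₀⟩ := hone hx₀
  refine ⟨β z₀ x₀, by simpa [hz₀] using h z₀ x₀, fun z x => ?_⟩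
  have hright := hzero z₀ (x - B z₀ x • x₀) (by simp [hz₀])
  have hleft := hzero (z - B z x₀ • z₀) x₀ (by simp [hz₀])
  have hboth := hzero (z - (B z x + (1 - B z₀ x) * B z x₀) • z₀) (x + (1 - B z₀ x) • x₀)
    (by simp [hz₀])
  simp only [map_sub, map_add, map_smul, LinearMap.sub_apply, LinearMap.smul_apply, smul_eq_mul]
    at hright hleft hboth
  linear_combination hboth - (1 - B z₀ x) * hleft + (B z x + (1 - B z₀ x) * B z x₀) * hright

end ScalarMultiple

section Similarity

variable {𝕜 E X Z : Type*} [RCLike 𝕜] [NormedAddCommGroup E] [NormedSpace 𝕜 E]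
  [NormedAddCommGroup X] [NormedSpace 𝕜 X] [NormedAddCommGroup Z] [NormedSpace 𝕜 Z]

lemma topologicalClosure_eq_top_of_forall_dual {p : Submodule 𝕜 E}
    (h : ∀ g : StrongDual 𝕜 E, (∀ x ∈ p, g x = 0) → g = 0) : p.topologicalClosure = ⊤ := by
  set q := p.topologicalClosure
  have : IsClosed (q : Set E) := p.isClosed_topologicalClosure
  refine Submodule.eq_top_iff'.2 fun y => (Submodule.Quotient.mk_eq_zero q).1 ?_
  refine (SeparatingDual.eq_iff_forall_dual_eq (R := 𝕜)).2 fun g => ?_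
  have hg : g.comp q.mkQL = 0 := h _ fun x hx => by
    have hxq : q.mkQL x = 0 := (Submodule.Quotient.mk_eq_zero q).2 (p.le_topologicalClosure hx)
    rw [comp_apply, hxq, map_zero]
  rw [map_zero]
  exact DFunLike.congr_fun hg y

lemma continuous_of_forall_continuous_dual [CompleteSpace X] [CompleteSpace E] {ι : Type*}
    (L : ι → StrongDual 𝕜 E) (hL : ∀ y, (∀ j, L j y = 0) → y = 0) {U : X →ₗ[𝕜] E}
    (hU : ∀ j, Continuous fun x => L j (U x)) : Continuous U := by
  refine U.continuous_of_seq_closed_graph fun u x y hu hUu => sub_eq_zero.1 (hL _ fun j => ?_)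
  rw [map_sub, sub_eq_zero]
  exact tendsto_nhds_unique (((L j).continuous.tendsto y).comp hUu) (((hU j).tendsto x).comp hu)

variable [CompleteSpace E] [CompleteSpace X]

lemma exists_continuousLinearEquiv_of_pairing [CompleteSpace Z] {B : Z →L[𝕜] X →L[𝕜] 𝕜}
    (hB : ∀ x, ‖x‖ ≤ ‖B.flip x‖) {ζ : 𝕜} (hζ : ζ ≠ 0) {U : X →ₗ[𝕜] E}
    {W : Z →ₗ[𝕜] StrongDual 𝕜 E} (hWU : ∀ z x, W z (U x) = ζ * B z x)
    (hW : ∀ y, (∀ z, W z y = 0) → y = 0) (hU : ∀ g : StrongDual 𝕜 E, (∀ x, g (U x) = 0) → g = 0) :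
    ∃ S : X ≃L[𝕜] E, ⇑S = U := by
  have hUc : Continuous U := by
    refine continuous_of_forall_continuous_dual W hW fun z => ?_
    simp only [hWU]
    fun_prop
  have hWc : Continuous W := by
    refine continuous_of_forall_continuous_dual (fun x => ContinuousLinearMap.apply 𝕜 𝕜 (U x))
      hU fun x => ?_
    simp only [apply_apply, hWU]
    fun_prop
  let U' : X →L[𝕜] E := ⟨U, hUc⟩
  let W' : Z →L[𝕜] StrongDual 𝕜 E := ⟨W, hWc⟩
  have hbound (x : X) : ‖x‖ ≤ (‖ζ‖₊⁻¹ * ‖W'‖₊ : NNReal) * ‖U' x‖ := by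
    refine (hB x).trans (opNorm_le_bound _ (by positivity) fun z => ?_)
    have hBzx : B z x = ζ⁻¹ * W' z (U' x) := by
      rw [eq_inv_mul_iff_mul_eq₀ hζ]
      exact (hWU z x).symm
    calc ‖B z x‖ = ‖ζ‖⁻¹ * ‖W' z (U' x)‖ := by rw [hBzx, norm_mul, norm_inv]
      _ ≤ ‖ζ‖⁻¹ * (‖W'‖ * ‖z‖ * ‖U' x‖) := by gcongr; exact W'.le_opNorm₂ z (U' x)
      _ = ‖ζ‖⁻¹ * ‖W'‖ * ‖U' x‖ * ‖z‖ := by ring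
  have hdense : U'.range.topologicalClosure = ⊤ :=
    topologicalClosure_eq_top_of_forall_dual fun g hg => hU g fun x => hg _ ⟨x, rfl⟩
  have hbij := U'.bijective_iff_dense_range_and_antilipschitz.2
    ⟨hdense, _, AddMonoidHomClass.antilipschitz_of_bound U' hbound⟩
  exact ⟨.ofBijective U' (LinearMap.ker_eq_bot.2 hbij.1) (LinearMap.range_eq_top.2 hbij.2), rfl⟩

theorem exists_eq_smul_conj_of_pairing [CompleteSpace Z] [Nontrivial X] [Nontrivial E]
    {B : Z →L[𝕜] X →L[𝕜] 𝕜} (hB : ∀ x, ‖x‖ ≤ ‖B.flip x‖) {U : X →ₗ[𝕜] E}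
    {W : Z →ₗ[𝕜] StrongDual 𝕜 E} {m : ℕ} (hm : m ≠ 0)
    (hWU : ∀ z x, B z x ≠ 0 → W z (U x) ^ m = B z x ^ m)
    (hsep : ∀ (g : StrongDual 𝕜 E) y, (∀ z x, W z y * g (U x) = 0) → g = 0 ∨ y = 0)
    {ι : Type*} {T : ι → E →L[𝕜] E} {D : ι → X →L[𝕜] X}
    (hTD : ∀ j z x, W z (T j (U x)) = B z (D j x)) :
    ∃ ξ : 𝕜, ξ ^ m = 1 ∧ ∃ S : X ≃L[𝕜] E, ∀ j,
      T j = ξ • ((S : X →L[𝕜] E) ∘L D j ∘L (S.symm : E →L[𝕜] X)) := by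
  let B' : Z →ₗ[𝕜] X →ₗ[𝕜] 𝕜 := coeLM 𝕜 ∘ₗ B.toLinearMap
  have hB' : B'.SeparatingRight := fun x hx => by
    have hflip : B.flip x = 0 := ContinuousLinearMap.ext hx
    simpa [hflip] using hB x
  obtain ⟨ζ, hζ, hβ⟩ := exists_forall_apply_eq_mul_of_pow_eq (B := B')
    (β := (coeLM 𝕜 ∘ₗ W).compl₂ U) hB' hm hWU
  have hWU' (z : Z) (x : X) : W z (U x) = ζ * B z x := hβ z x
  have hζ0 : ζ ≠ 0 := by
    rintro rfl
    simp [hm] at hζ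
  obtain ⟨e, he⟩ := exists_ne (0 : E)
  obtain ⟨f, hf⟩ := exists_ne (0 : StrongDual 𝕜 E)
  have hW (y : E) (hy : ∀ z, W z y = 0) : y = 0 :=
    (hsep f y fun z x => by rw [hy, zero_mul]).resolve_left hf
  obtain ⟨S, hS⟩ := exists_continuousLinearEquiv_of_pairing hB hζ0 hWU' hW
    fun g hg => (hsep g e fun z x => by rw [hg, mul_zero]).resolve_right he
  simp only [← hS] at hTD hWU'
  refine ⟨ζ⁻¹, by rw [inv_pow, hζ, inv_one], S, fun j => ContinuousLinearMap.ext fun y => ?_⟩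
  obtain ⟨x, rfl⟩ := S.surjective y
  refine sub_eq_zero.1 (hW _ fun z => ?_)
  simp [hTD, hWU', hζ0]

end Similarity

section Main

variable {𝕜 E : Type*} [RCLike 𝕜] [NormedAddCommGroup E] [NormedSpace 𝕜 E] [CompleteSpace E]
  {A : Subalgebra 𝕜 (E →L[𝕜] E)} {φ : A → A}

section Factorization

variable [Nontrivial E] {m : ℕ} {M : E →ₗ[𝕜] StrongDual 𝕜 E →ₗ[𝕜] E →L[𝕜] E}

lemma IsTraceTranspose.exists_eq_smul_conj (hM : IsTraceTranspose φ m M) (hm : m ≠ 0)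
    (hsep : ∀ (g : StrongDual 𝕜 E) z, (∀ x f, g (M x f z) = 0) → g = 0 ∨ z = 0)
    {U : E →ₗ[𝕜] E} {V : StrongDual 𝕜 E →ₗ[𝕜] StrongDual 𝕜 E}
    (hUV : ∀ x f, M x f = (V f).smulRight (U x)) :
    ∃ ξ : 𝕜, ξ ^ m = 1 ∧ ∃ S : E ≃L[𝕜] E, ∀ a : A,
      (φ a : E →L[𝕜] E) = ξ • ((S : E →L[𝕜] E) ∘L (a : E →L[𝕜] E) ∘L (S.symm : E →L[𝕜] E)) := by
  refine exists_eq_smul_conj_of_pairing (B := ContinuousLinearMap.id 𝕜 (StrongDual 𝕜 E))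
    (fun x => ?_) hm (fun f x => hM.pow_eq (hUV x f))
    (fun g z h => hsep g z fun x f => by simpa [hUV] using h f x)
    fun a f x => hM.apply_eq (hUV x f) a
  exact ((NormedSpace.inclusionInDoubleDualLi 𝕜).norm_map x).ge

lemma IsTraceTranspose.exists_eq_smul_conj_dual (hM : IsTraceTranspose φ m M) (hm : m ≠ 0)
    (hsep : ∀ (g : StrongDual 𝕜 E) z, (∀ x f, g (M x f z) = 0) → g = 0 ∨ z = 0)
    {U : StrongDual 𝕜 E →ₗ[𝕜] E} {V : E →ₗ[𝕜] StrongDual 𝕜 E}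
    (hUV : ∀ x f, M x f = (V x).smulRight (U f)) :
    ∃ ξ : 𝕜, ξ ^ m = 1 ∧ ∃ S : StrongDual 𝕜 E ≃L[𝕜] E, ∀ a : A,
      (φ a : E →L[𝕜] E) = ξ • ((S : StrongDual 𝕜 E →L[𝕜] E) ∘L
        (compL 𝕜 E E 𝕜).flip (a : E →L[𝕜] E) ∘L (S.symm : E →L[𝕜] StrongDual 𝕜 E)) :=
  exists_eq_smul_conj_of_pairing (B := (ContinuousLinearMap.id 𝕜 (StrongDual 𝕜 E)).flip)
    (fun f => by simp) hm (fun x f => hM.pow_eq (hUV x f))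
    (fun g z h => hsep g z fun x f => by simpa [hUV] using h x f)
    fun a x f => hM.apply_eq (hUV x f) a

end Factorization

lemma LocallyPreservesJordanWord.exists_eq_smul_conj [Nontrivial E] {r s : ℕ}
    (hφ : LocallyPreservesJordanWord φ r s) (hA : ∀ (k : StrongDual 𝕜 E) u, k.smulRight u ∈ A)
    (hrange : ∀ T : E →L[𝕜] E, LinearMap.rank T.toLinearMap ≤ 2 →
      ∃ a : A, (φ a : E →L[𝕜] E) = T)
    (hr : r ≠ 0) (hsr : s ≤ r) :
    ∃ ξ : 𝕜, ξ ^ (r + s + 1) = 1 ∧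
      ((∃ S : E ≃L[𝕜] E, ∀ a : A, (φ a : E →L[𝕜] E) =
          ξ • ((S : E →L[𝕜] E) ∘L (a : E →L[𝕜] E) ∘L (S.symm : E →L[𝕜] E))) ∨
        ∃ S : StrongDual 𝕜 E ≃L[𝕜] E, ∀ a : A, (φ a : E →L[𝕜] E) =
          ξ • ((S : StrongDual 𝕜 E →L[𝕜] E) ∘L (compL 𝕜 E E 𝕜).flip (a : E →L[𝕜] E) ∘L
            (S.symm : E →L[𝕜] StrongDual 𝕜 E))) := by
  have hrange₁ (g : StrongDual 𝕜 E) (y : E) : ∃ a : A, (φ a : E →L[𝕜] E) = g.smulRight y :=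
    hrange _ ((rank_smulRight_le_one g y).trans one_le_two)
  obtain ⟨M, hM⟩ := exists_isTraceTranspose (m := r + s + 1)
    (fun f x hfx => hφ.exists_forall_apply_eq hA hrange hr hsr hfx) hrange₁
  have hsep := hM.eq_zero_or_eq_zero_of_forall_apply (hφ.map_zero hrange) hrange₁
  rcases exists_forall_eq_smulRight_or_flip hM.isRankLEOne (hM.eq_zero_or_eq_zero hA) hsep with
    ⟨U, V, hUV⟩ | ⟨U, V, hUV⟩
  · obtain ⟨ξ, hξ, hS⟩ := hM.exists_eq_smul_conj (by lia) hsep hUV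
    exact ⟨ξ, hξ, .inl hS⟩
  · obtain ⟨ξ, hξ, hS⟩ := hM.exists_eq_smul_conj_dual (by lia) hsep hUV
    exact ⟨ξ, hξ, .inr hS⟩

theorem stmt6_general {ι : Type*}
    (hA : ∀ T : E →L[𝕜] E, LinearMap.rank (T : E →ₗ[𝕜] E) < ℵ₀ → T ∈ A)
    {m : ℕ} (hm : 2 ≤ m) (i : Fin m → ι) (hp : ∃ p : Fin m, ∀ q : Fin m, q ≠ p → i q ≠ i p)
    (hrange : ∀ T : E →L[𝕜] E, LinearMap.rank (T : E →ₗ[𝕜] E) ≤ 2 →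
      ∃ a : A, (φ a : E →L[𝕜] E) = T)
    (hφ : ∀ a : ι → A,
      (∃ j, LinearMap.rank ((a j : E →L[𝕜] E) : E →ₗ[𝕜] E) ≤ 1) →
      ∃ θ : A ≃ₗ[𝕜] A, IsJordanHom θ ∧
        (List.ofFn fun j => φ (a (i j))).prod + (List.ofFn fun j => φ (a (i j))).reverse.prod =
          θ ((List.ofFn fun j => a (i j)).prod + (List.ofFn fun j => a (i j)).reverse.prod)) :
    ∃ ξ : 𝕜, ξ ^ m = 1 ∧
      ((∃ S : E ≃L[𝕜] E, ∀ a : A, (φ a : E →L[𝕜] E) =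
          ξ • ((S : E →L[𝕜] E) ∘L (a : E →L[𝕜] E) ∘L (S.symm : E →L[𝕜] E))) ∨
        ∃ S : StrongDual 𝕜 E ≃L[𝕜] E, ∀ a : A, (φ a : E →L[𝕜] E) =
          ξ • ((S : StrongDual 𝕜 E →L[𝕜] E) ∘L (compL 𝕜 E E 𝕜).flip (a : E →L[𝕜] E) ∘L
            (S.symm : E →L[𝕜] StrongDual 𝕜 E))) := by
  rcases subsingleton_or_nontrivial E with hE | hE
  · exact ⟨1, one_pow m, .inl ⟨.refl 𝕜 E, fun a => Subsingleton.elim _ _⟩⟩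
  obtain ⟨p, hp⟩ := hp
  have hA₁ (k : StrongDual 𝕜 E) (u : E) : k.smulRight u ∈ A :=
    hA _ ((rank_smulRight_le_one k u).trans_lt one_lt_aleph0)
  have hword := locallyPreservesJordanWord_of_forall_prod hm hp hφ
  rcases le_total (m - 1 - p) p with hle | hle
  · have hm' : p + (m - 1 - p) + 1 = m := by lia
    exact hm' ▸ hword.exists_eq_smul_conj hA₁ hrange (by lia) hle
  · have hm' : m - 1 - p + p + 1 = m := by lia
    exact hm' ▸ hword.symm.exists_eq_smul_conj hA₁ hrange (by lia) hle

end Main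

theorem stmt6 {E : Type*} [NormedAddCommGroup E] [NormedSpace ℂ E] [CompleteSpace E]
    (A : Subalgebra ℂ (E →L[ℂ] E))
    -- `A` is a standard operator algebra: it contains every bounded finite-rank operator
    (hA : ∀ T : E →L[ℂ] E, LinearMap.rank (T : E →ₗ[ℂ] E) < ℵ₀ → T ∈ A)
    -- data of the generalized Jordan product
    -- `T_1 ∘ ⋯ ∘ T_k = T_{i 0} ⋯ T_{i (m-1)} + T_{i (m-1)} ⋯ T_{i 0}`
    (m k : ℕ) (hk : 2 ≤ k) (i : Fin m → Fin k)
    (hionto : Function.Surjective i)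
    (hp : ∃ p : Fin m, ∀ q : Fin m, q ≠ p → i q ≠ i p)
    (φ : A → A)
    -- the range of `φ` contains all bounded operators of rank at most three
    (hrange : ∀ T : E →L[ℂ] E, LinearMap.rank (T : E →ₗ[ℂ] E) ≤ 3 →
      ∃ a : A, (φ a : E →L[ℂ] E) = T)
    -- operational local Jordan automorphism condition for the generalized Jordan product
    (hφ : ∀ a : Fin k → A,
      (∃ j : Fin k, LinearMap.rank ((a j : E →L[ℂ] E) : E →ₗ[ℂ] E) ≤ 1) →
      ∃ θ : A → A, IsJordanAutomorphism θ ∧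
        (List.ofFn fun j => φ (a (i j))).prod + (List.ofFn fun j => φ (a (i j))).reverse.prod =
          θ ((List.ofFn fun j => a (i j)).prod + (List.ofFn fun j => a (i j)).reverse.prod)) :
    ∃ ξ : ℂ, ξ ^ m = 1 ∧
      ((∃ S : E ≃L[ℂ] E, ∀ a : A,
          (φ a : E →L[ℂ] E) =
            ξ • ((S : E →L[ℂ] E) ∘L (a : E →L[ℂ] E) ∘L (S.symm : E →L[ℂ] E))) ∨
       (∃ S : (E →L[ℂ] ℂ) ≃L[ℂ] E, ∀ a : A,
          (φ a : E →L[ℂ] E) =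
            ξ • ((S : (E →L[ℂ] ℂ) →L[ℂ] E) ∘L dualOp (a : E →L[ℂ] E) ∘L
              (S.symm : E →L[ℂ] (E →L[ℂ] ℂ))))) := by
  have hm : k ≤ m := by simpa using Fintype.card_le_of_surjective i hionto
  refine stmt6_general hA (hk.trans hm) i hp
    (fun T hT => hrange T (hT.trans (by norm_cast))) fun a ha => ?_
  obtain ⟨_, hθ, h⟩ := hφ a ha
  obtain ⟨e, rfl, he⟩ := hθ.exists_linearEquiv
  exact ⟨e, he, h⟩
end

section
/- Let A be a unital simple C*-algebra with a faithful tracial state τ, and let φ : A → A be a (not necessarily linear, additive or continuous) map such that for any a, b ∈ A there is a linear derivation D_{a,b} : A → A with φ(a)b + aφ(b) = D_{a,b}(ab). Then φ is a linear derivation, i.e., φ is complex-linear and φ(ab) = φ(a)b + aφ(b) for all a, b ∈ A. -/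
set_option synthInstance.maxHeartbeats 1000000
set_option maxHeartbeats 1000000

open scoped ComplexOrder

/-!
For a derivation `D`, a bounded trace `τ` and a unitary `u` one has
`τ (D (u ^ (n + 1)) * u⁻¹ ^ n) = (n + 1) * τ (D u)`. Since `D` is automatically continuous, the
left-hand side is bounded in `n`, so `τ ∘ D` vanishes on unitaries, hence everywhere. The hypothesis
therefore gives `τ (φ a * b) = -τ (a * φ b)`: the map `φ` has an adjoint for the nondegenerate
trace form, and so it is linear.

Taking `b = a⁻¹` in the hypothesis gives `φ u * u⁻¹ + u * φ u⁻¹ = 0` for units `u`. When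
`u + v = 1`, substituting this into `(u * v)⁻¹ = u⁻¹ + v⁻¹` yields the Leibniz rule for `u * u`, and
every element is a scalar minus such a `u`. So `φ` is a Jordan derivation, and on a 2-torsion-free
semiprime ring these are derivations (Brešar, Cusack).

For the continuity of `D`, let `y` be self-adjoint with `‖y‖` in its spectrum, and write
`y = ‖y‖ - k * k` with `k` self-adjoint and singular. Then `D y = -(D k * k + k * D k)` is
negligible on approximate null vectors of `k`, where `y` almost attains its norm. Hence
`‖y‖ ≤ ‖y + t • ℜ (D y)‖`, and such an everywhere defined dissipative operator has closed graph.
-/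

section Semiprime

/-- A semiprime ring, in the elementwise form `z R z = 0 → z = 0`; the class of rings on which
Jordan derivations are derivations. -/
def IsSemiprimeRing (R : Type*) [Ring R] : Prop :=
  ∀ z : R, (∀ y, z * y * z = 0) → z = 0

variable {R : Type*} [Ring R]

theorem isSemiprimeRing_of_cstarRing {A : Type*} [NormedRing A] [StarRing A] [CStarRing A] :
    IsSemiprimeRing A := by
  intro z hz
  have hzz : star (star z * z) * (star z * z) = 0 := by
    rw [star_mul, star_star, mul_assoc, ← mul_assoc z, hz, mul_zero]
  simpa only [CStarRing.star_mul_self_eq_zero_iff] using hzz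

namespace IsSemiprimeRing

theorem isReduced_center (hR : IsSemiprimeRing R) : IsReduced (Subring.center R) := by
  refine (isReduced_iff_pow_one_lt 2 one_lt_two).2 fun z hz ↦ Subtype.ext <| hR z fun y ↦ ?_
  have hzz : (z : R) * z = 0 := by simpa [sq] using congrArg Subtype.val hz
  rw [← Subring.mem_center_iff.1 z.2 y, mul_assoc, hzz, mul_zero]

theorem mul_mul_eq_zero_of_add_swap_eq_zero (hR : IsSemiprimeRing R)
    (h2 : IsSMulRegular R (2 : ℕ)) {s k : R} (h : ∀ x, s * x * k + k * x * s = 0) (x : R) :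
    s * x * k = 0 := by
  have hswap : ∀ x, k * x * s = -(s * x * k) := fun x ↦ eq_neg_of_add_eq_zero_right (h x)
  refine hR _ fun y ↦ h2.right_eq_zero_of_smul ?_
  have hneg : s * x * k * y * (s * x * k) = -(s * x * k * y * (s * x * k)) := calc
    s * x * k * y * (s * x * k) = s * x * (k * y * s) * x * k := by noncomm_ring
    _ = -(s * (x * s * y) * k) * x * k := by rw [hswap]; noncomm_ring
    _ = k * x * s * y * (s * x * k) := by rw [← hswap]; noncomm_ring
    _ = -(s * x * k * y * (s * x * k)) := by rw [hswap]; noncomm_ring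
  rw [two_nsmul]
  exact eq_neg_iff_add_eq_zero.1 hneg

theorem mul_mul_eq_zero_of_forall_diag {M : Type*} [AddGroup M] (hR : IsSemiprimeRing R)
    {f g : M →+ R} (h : ∀ a x, f a * x * g a = 0) (a b : M) (x : R) : f a * x * g b = 0 := by
  have hswap : f a * x * g b = -(f b * x * g a) := by
    have hab := h (a + b) x
    simp only [map_add, add_mul, mul_add, h, zero_add, add_zero] at hab
    exact eq_neg_of_add_eq_zero_right hab
  refine hR _ fun y ↦ ?_
  calc f a * x * g b * y * (f a * x * g b)
      = -(f a * (x * g b * y * f b * x) * g a) := by nth_rw 2 [hswap]; noncomm_ring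
    _ = 0 := by rw [h, neg_zero]

end IsSemiprimeRing

end Semiprime

section Derivation

/-- A derivation, encoded as the bare Leibniz rule: additivity or linearity of `D`, where it is
needed, is carried by the type of `D`. -/
def IsDerivation {R : Type*} [Mul R] [Add R] (D : R → R) : Prop :=
  ∀ a b, D (a * b) = D a * b + a * D b

/-- A Jordan derivation: the Leibniz rule is only required of squares. As for `IsDerivation`,
additivity is carried by the type of `D`. -/
def IsJordanDerivation {R : Type*} [Mul R] [Add R] (D : R → R) : Prop :=
  ∀ a, D (a * a) = D a * a + a * D a

namespace IsDerivation

protected theorem map_one {R : Type*} [NonAssocRing R] {D : R → R} (hD : IsDerivation D) :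
    D 1 = 0 := by
  simpa using hD 1 1

theorem const_smul {S R : Type*} [NonUnitalNonAssocSemiring R] [DistribSMul S R]
    [IsScalarTower S R R] [SMulCommClass S R R] {D : R → R} (hD : IsDerivation D) (c : S) :
    IsDerivation (c • D) := fun a b ↦ by
  simp only [Pi.smul_apply, hD a b, smul_add, smul_mul_assoc, mul_smul_comm]

end IsDerivation

variable {R : Type*} [Ring R] {D : R →+ R}

/-- The failure `D (a * b) - D a * b - a * D b` of the Leibniz rule, as a biadditive map. -/
def leibnizDefect (D : R →+ R) : R →+ R →+ R :=
  AddMonoidHom.mul.compr₂ D - AddMonoidHom.mul.comp D - AddMonoidHom.mul.compl₂ D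

theorem leibnizDefect_apply (D : R →+ R) (a b : R) :
    leibnizDefect D a b = D (a * b) - D a * b - a * D b :=
  rfl

theorem isDerivation_iff_leibnizDefect_eq_zero :
    IsDerivation D ↔ ∀ a b, leibnizDefect D a b = 0 := by
  simp only [IsDerivation, leibnizDefect_apply, sub_sub, sub_eq_zero]

namespace IsJordanDerivation

theorem map_mul_add_map_mul_swap (hD : IsJordanDerivation D) (a b : R) :
    D (a * b) + D (b * a) = D a * b + a * D b + D b * a + b * D a := by
  have hab := hD (a + b)
  simp only [mul_add, add_mul, map_add, hD a, hD b] at hab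
  grind

theorem map_mul_mul_self (hD : IsJordanDerivation D) (h2 : IsSMulRegular R (2 : ℕ)) (a b : R) :
    D (a * b * a) = D a * b * a + a * D b * a + a * b * D a := by
  refine h2 ?_
  have hsplit : (2 : ℕ) • D (a * b * a) = D (a * (a * b + b * a)) + D ((a * b + b * a) * a)
      - (D (a * a * b) + D (b * (a * a))) := by
    simp only [← map_nsmul, ← map_add, ← map_sub]
    congr 1
    noncomm_ring
  simp only [hsplit, hD.map_mul_add_map_mul_swap, map_add (f := D) (a * b), hD a]
  noncomm_ring

theorem map_mul_mul_add_map_mul_mul_swap (hD : IsJordanDerivation D)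
    (h2 : IsSMulRegular R (2 : ℕ)) (a b c : R) :
    D (a * b * c) + D (c * b * a) = D a * b * c + a * D b * c + a * b * D c
      + (D c * b * a + c * D b * a + c * b * D a) := by
  have hsplit : D (a * b * c) + D (c * b * a)
      = D ((a + c) * b * (a + c)) - D (a * b * a) - D (c * b * c) := by
    simp only [← map_add, ← map_sub]
    congr 1
    noncomm_ring
  simp only [hsplit, hD.map_mul_mul_self h2, map_add]
  noncomm_ring

theorem leibnizDefect_swap (hD : IsJordanDerivation D) (a b : R) :
    leibnizDefect D b a = -leibnizDefect D a b := by
  have hba := eq_sub_of_add_eq' (hD.map_mul_add_map_mul_swap a b)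
  rw [leibnizDefect_apply, leibnizDefect_apply, hba]
  abel

theorem leibnizDefect_mul_mul_lie_add (hD : IsJordanDerivation D) (h2 : IsSMulRegular R (2 : ℕ))
    (a b x : R) : leibnizDefect D a b * x * ⁅a, b⁆ + ⁅a, b⁆ * x * leibnizDefect D a b = 0 := by
  -- Expand `D (abxba + baxab)` in two ways.
  have hexpand : D (a * b * x * (b * a)) + D (b * a * x * (a * b))
      = D (a * (b * x * b) * a) + D (b * (a * x * a) * b) := by simp only [mul_assoc]
  rw [hD.map_mul_mul_add_map_mul_mul_swap h2] at hexpand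
  simp only [hD.map_mul_mul_self h2] at hexpand
  rw [eq_sub_of_add_eq' (hD.map_mul_add_map_mul_swap a b), ← sub_eq_zero] at hexpand
  rw [leibnizDefect_apply, Ring.lie_def, ← neg_eq_zero, ← hexpand]
  noncomm_ring

theorem leibnizDefect_mul_mul_lie (hD : IsJordanDerivation D) (hR : IsSemiprimeRing R)
    (h2 : IsSMulRegular R (2 : ℕ)) (a b x c d : R) : leibnizDefect D a b * x * ⁅c, d⁆ = 0 := by
  let ad (c : R) : R →+ R := .mulLeft c - .mulRight c
  have had : ∀ c d : R, ad c d = ⁅c, d⁆ := fun _ _ ↦ rfl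
  have hdiag : ∀ a b x : R, leibnizDefect D a b * x * ⁅a, b⁆ = 0 := fun a b ↦
    hR.mul_mul_eq_zero_of_add_swap_eq_zero h2 (hD.leibnizDefect_mul_mul_lie_add h2 a b)
  have hleft : ∀ a b x c : R, leibnizDefect D a b * x * ⁅c, b⁆ = 0 := by
    intro a b x c
    have hflip := hR.mul_mul_eq_zero_of_forall_diag (f := (leibnizDefect D).flip b)
      (g := -ad b)
      (fun a x ↦ by simpa [had, Ring.lie_def] using hdiag a b x) a c x
    simpa [had, Ring.lie_def] using hflip
  exact hR.mul_mul_eq_zero_of_forall_diag (f := leibnizDefect D a) (g := ad c)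
    (fun b x ↦ hleft a b x c) b d x

theorem leibnizDefect_mem_center (hD : IsJordanDerivation D) (hR : IsSemiprimeRing R)
    (h2 : IsSMulRegular R (2 : ℕ)) (a b : R) : leibnizDefect D a b ∈ Subring.center R := by
  refine Subring.mem_center_iff.2 fun y ↦ ?_
  set e := leibnizDefect D a b
  have hlie : ∀ x, e * x * ⁅e, y⁆ = 0 := fun x ↦ hD.leibnizDefect_mul_mul_lie hR h2 a b x e y
  have hcomm : ⁅e, y⁆ = 0 := hR _ fun x ↦ calc
    ⁅e, y⁆ * x * ⁅e, y⁆ = e * (y * x) * ⁅e, y⁆ - y * (e * x * ⁅e, y⁆) := by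
      rw [Ring.lie_def]; noncomm_ring
    _ = 0 := by rw [hlie, hlie, mul_zero, sub_zero]
  exact (sub_eq_zero.1 hcomm).symm

theorem leibnizDefect_pow_three (hD : IsJordanDerivation D) (hR : IsSemiprimeRing R)
    (h2 : IsSMulRegular R (2 : ℕ)) (a b : R) : leibnizDefect D a b ^ 3 = 0 := by
  have hcentral := Subring.mem_center_iff.1 (hD.leibnizDefect_mem_center hR h2 a b)
  have hlie : ∀ x c d, leibnizDefect D a b * x * ⁅c, d⁆ = 0 :=
    hD.leibnizDefect_mul_mul_lie hR h2 a b
  have htwo : leibnizDefect D a b - leibnizDefect D b a = D ⁅a, b⁆ - ⁅D a, b⁆ - ⁅a, D b⁆ := by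
    simp only [leibnizDefect_apply, Ring.lie_def, map_sub]
    abel
  rw [hD.leibnizDefect_swap a b, sub_neg_eq_add] at htwo
  set e := leibnizDefect D a b
  have hlie' : ∀ c d, e * ⁅c, d⁆ = 0 := fun c d ↦ by simpa using hlie 1 c d
  have hsq : (2 : ℕ) • (e * e) = e * D ⁅a, b⁆ := calc
    (2 : ℕ) • (e * e) = e * (e + e) := by noncomm_ring
    _ = e * D ⁅a, b⁆ := by rw [htwo, mul_sub, mul_sub, hlie', hlie', sub_zero, sub_zero]
  have hjordan : D e * ⁅a, b⁆ + e * D ⁅a, b⁆ + D ⁅a, b⁆ * e + ⁅a, b⁆ * D e = 0 := by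
    rw [← hD.map_mul_add_map_mul_swap, hcentral, hlie', map_zero, add_zero]
  have hzero : (2 : ℕ) • (e * (e * D ⁅a, b⁆)) = 0 := calc
    (2 : ℕ) • (e * (e * D ⁅a, b⁆))
        = e * D e * ⁅a, b⁆ + e * (e * D ⁅a, b⁆) + e * (D ⁅a, b⁆ * e) + e * ⁅a, b⁆ * D e := by
      rw [hlie, hlie', hcentral]; noncomm_ring
    _ = e * (D e * ⁅a, b⁆ + e * D ⁅a, b⁆ + D ⁅a, b⁆ * e + ⁅a, b⁆ * D e) := by noncomm_ring
    _ = 0 := by rw [hjordan, mul_zero]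
  refine h2.right_eq_zero_of_smul ?_
  calc (2 : ℕ) • e ^ 3 = e * (2 : ℕ) • (e * e) := by noncomm_ring
    _ = e * (e * D ⁅a, b⁆) := by rw [hsq]
    _ = 0 := h2.right_eq_zero_of_smul hzero

theorem isDerivation (hD : IsJordanDerivation D) (hR : IsSemiprimeRing R)
    (h2 : IsSMulRegular R (2 : ℕ)) : IsDerivation D := by
  refine isDerivation_iff_leibnizDefect_eq_zero.2 fun a b ↦ ?_
  let e : Subring.center R := ⟨leibnizDefect D a b, hD.leibnizDefect_mem_center hR h2 a b⟩
  have hnil : IsNilpotent e := ⟨3, Subtype.ext (hD.leibnizDefect_pow_three hR h2 a b)⟩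
  have := hR.isReduced_center
  exact congrArg Subtype.val hnil.eq_zero

end IsJordanDerivation

end Derivation

section Inverses

section Ring

variable {R : Type*} [Ring R] {D : R →+ R}

theorem map_mul_of_map_inv_of_add_eq_one (hinv : ∀ u : Rˣ, D u * ↑u⁻¹ + u * D ↑u⁻¹ = 0)
    {u v : Rˣ} (huv : (u + v : R) = 1) : D (u * v) = v * D u * v + u * D v * u := by
  have hcomm : Commute u v := Units.ext <| by
    push_cast
    rw [eq_sub_of_add_eq' huv, mul_sub, sub_mul, mul_one, one_mul]
  have hconj : ∀ w : Rˣ, D w = -(w * D ↑w⁻¹ * w) := fun w ↦ calc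
    D w = (D w * ↑w⁻¹ + w * D ↑w⁻¹) * w - w * D ↑w⁻¹ * w := by
      rw [add_mul, w.inv_mul_cancel_right, add_sub_cancel_right]
    _ = -(w * D ↑w⁻¹ * w) := by rw [hinv, zero_mul, zero_sub]
  have hsum : (↑(u * v)⁻¹ : R) = ↑u⁻¹ + ↑v⁻¹ := by
    rw [hcomm.eq, mul_inv_rev]
    calc ((u⁻¹ * v⁻¹ : Rˣ) : R) = ↑u⁻¹ * (u + v) * ↑v⁻¹ := by rw [huv]; simp
      _ = ↑u⁻¹ + ↑v⁻¹ := by simp [mul_add, add_mul, add_comm]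
  have hcomm' : (u * v : R) = v * u := congrArg Units.val hcomm
  calc D (u * v) = -(v * u * D ↑u⁻¹ * (u * v)) - u * v * D ↑v⁻¹ * (v * u) := by
        rw [← Units.val_mul, hconj, hsum, map_add, Units.val_mul, ← hcomm']
        noncomm_ring
    _ = v * -(u * D ↑u⁻¹ * u) * v + u * -(v * D ↑v⁻¹ * v) * u := by noncomm_ring
    _ = v * D u * v + u * D v * u := by rw [← hconj, ← hconj]

theorem map_mul_self_of_map_inv (h1 : D 1 = 0) (hinv : ∀ u : Rˣ, D u * ↑u⁻¹ + u * D ↑u⁻¹ = 0)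
    {p : R} (hp : IsUnit p) (hq : IsUnit (1 - p)) : D (p * p) = D p * p + p * D p := by
  obtain ⟨u, rfl⟩ := hp
  obtain ⟨v, hv⟩ := hq
  have huv := map_mul_of_map_inv_of_add_eq_one hinv (u := u) (v := v) (by rw [hv]; abel)
  rw [hv, mul_sub, mul_one, map_sub, map_sub, h1] at huv
  rw [← sub_eq_zero, ← sub_eq_zero.2 huv.symm]
  noncomm_ring

end Ring

theorem isJordanDerivation_of_map_inv {𝕜 A : Type*} [NontriviallyNormedField 𝕜] [NormedRing A]
    [NormedAlgebra 𝕜 A] [CompleteSpace A] {D : A →ₗ[𝕜] A} (h1 : D 1 = 0)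
    (hinv : ∀ u : Aˣ, D u * ↑u⁻¹ + u * D ↑u⁻¹ = 0) : IsJordanDerivation D := by
  intro a
  obtain ⟨r, hr⟩ := NormedField.exists_lt_norm 𝕜 (‖a‖ * ‖(1 : A)‖ + 1)
  have hr' : ‖a‖ * ‖(1 : A)‖ < ‖r - 1‖ := by
    linarith [norm_sub_norm_le r 1, norm_one (α := 𝕜)]
  have hp : IsUnit (algebraMap 𝕜 A r - a) :=
    spectrum.mem_resolventSet_of_norm_lt_mul (by linarith)
  have hq : IsUnit (1 - (algebraMap 𝕜 A r - a)) := by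
    have hneg : 1 - (algebraMap 𝕜 A r - a) = -(algebraMap 𝕜 A (r - 1) - a) := by
      rw [map_sub, map_one]; abel
    exact hneg ▸ IsUnit.neg (spectrum.mem_resolventSet_of_norm_lt_mul hr')
  have hsq := map_mul_self_of_map_inv (D := D.toAddMonoidHom) h1 hinv hp hq
  simp only [LinearMap.toAddMonoidHom_coe, Algebra.algebraMap_eq_smul_one, mul_sub,
    sub_mul, smul_mul_assoc, mul_smul_comm, one_mul, mul_one, map_sub, map_smul, h1, smul_zero,
    zero_sub, mul_neg, neg_mul, smul_neg] at hsq
  grind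

end Inverses

section DissipativeOperator

open Filter Topology

-- If `u n → x` and `T (u n) → y`, apply the estimate to `u n - x - t • (y - T x)`
-- and let first `n → ∞`, then `t → 0`.
theorem continuous_of_norm_le_norm_add_smul {E : Type*} [NormedAddCommGroup E] [NormedSpace ℝ E]
    [CompleteSpace E] {T : E →ₗ[ℝ] E} (hT : ∀ t : ℝ, 0 < t → ∀ x, ‖x‖ ≤ ‖x + t • T x‖) :
    Continuous T := by
  refine T.continuous_of_seq_closed_graph fun u x y hu hTu ↦ ?_
  set z := y - T x
  have hv : Tendsto (fun n ↦ u n - x) atTop (𝓝 0) := by simpa using hu.sub_const x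
  have hTv : Tendsto (fun n ↦ T (u n - x)) atTop (𝓝 z) := by simpa using hTu.sub_const (T x)
  have hbound : ∀ t : ℝ, 0 < t → ‖z‖ ≤ t * ‖T z‖ := by
    intro t ht
    have hlim : ‖0 - t • z‖ ≤ ‖0 - t • z + t • (z - t • T z)‖ :=
      le_of_tendsto_of_tendsto' (hv.sub_const _).norm
        ((hv.sub_const _).add ((hTv.sub_const _).const_smul t)).norm
        fun n ↦ by simpa using hT t ht (u n - x - t • z)
    have hcancel : 0 - t • z + t • (z - t • T z) = -(t • t • T z) := by module
    rw [hcancel, zero_sub, norm_neg, norm_neg, norm_smul, norm_smul, norm_smul,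
      Real.norm_of_nonneg ht.le] at hlim
    exact le_of_mul_le_mul_left hlim ht
  have hlim : Tendsto (fun t : ℝ ↦ t * ‖T z‖) (𝓝[>] 0) (𝓝 0) := by
    simpa using (tendsto_id.mul_const ‖T z‖).mono_left (nhdsWithin_le_nhds (a := (0 : ℝ)))
  have hz : ‖z‖ ≤ 0 := ge_of_tendsto hlim (eventually_mem_nhdsWithin.mono hbound)
  exact sub_eq_zero.1 (norm_le_zero_iff.1 hz)

end DissipativeOperator

section Continuity

open scoped ComplexStarModule

variable {A : Type*} [CStarAlgebra A]

theorem exists_norm_eq_one_and_norm_mul_le {k : A} (hk : IsSelfAdjoint k) (h0 : 0 ∈ spectrum ℝ k)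
    {ε : ℝ} (hε : 0 < ε) : ∃ q : A, IsSelfAdjoint q ∧ ‖q‖ = 1 ∧ ‖k * q‖ ≤ ε := by
  have hf : Continuous fun t : ℝ ↦ max 0 (1 - |t| / ε) := by fun_prop
  have hf0 : ∀ t : ℝ, 0 ≤ max 0 (1 - |t| / ε) := fun t ↦ le_max_left _ _
  have hf1 : ∀ t : ℝ, max 0 (1 - |t| / ε) ≤ 1 := fun t ↦
    max_le zero_le_one (sub_le_self _ (by positivity))
  have htf : ∀ t : ℝ, |t| * max 0 (1 - |t| / ε) ≤ ε := by
    intro t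
    rcases le_total |t| ε with ht | ht
    · exact (mul_le_of_le_one_right (abs_nonneg t) (hf1 t)).trans ht
    · rw [max_eq_left (sub_nonpos.2 ((one_le_div hε).2 ht)), mul_zero]
      exact hε.le
  refine ⟨cfc (fun t : ℝ ↦ max 0 (1 - |t| / ε)) k, cfc_predicate _ _, le_antisymm ?_ ?_, ?_⟩
  · exact norm_cfc_le zero_le_one fun t _ ↦ by simpa only [Real.norm_of_nonneg (hf0 t)] using hf1 t
  · simpa using norm_apply_le_norm_cfc _ k h0 hf.continuousOn
  · nth_rw 1 [← cfc_id' ℝ k]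
    rw [← cfc_mul _ _ k (continuousOn_id' _) hf.continuousOn]
    refine norm_cfc_le hε.le fun t _ ↦ ?_
    simpa only [norm_mul, Real.norm_eq_abs, abs_of_nonneg (hf0 t)] using htf t

theorem abs_le_norm_algebraMap_add_mul_add_mul {k : A} (hk : IsSelfAdjoint k)
    (h0 : 0 ∈ spectrum ℝ k) (M : ℝ) (a b : A) : |M| ≤ ‖algebraMap ℝ A M + k * a + b * k‖ := by
  have hε : ∀ ε > 0, |M| ≤ ‖algebraMap ℝ A M + k * a + b * k‖ + ε * (‖a‖ + ‖b‖) := by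
    intro ε hε
    obtain ⟨q, hq, hq1, hkq⟩ := exists_norm_eq_one_and_norm_mul_le hk h0 hε
    have hqk : ‖q * k‖ ≤ ε := by
      rwa [← norm_star, star_mul, hk.star_eq, hq.star_eq]
    have hqq : ‖q * q‖ = 1 := by
      simpa [hq.star_eq, hq1] using CStarRing.norm_star_mul_self (x := q)
    set w := algebraMap ℝ A M + k * a + b * k
    have hsandwich : M • (q * q) = q * w * q - (q * k) * (a * q) - (q * b) * (k * q) := by
      simp only [w, Algebra.algebraMap_eq_smul_one, mul_add, add_mul, mul_smul_comm,
        smul_mul_assoc, mul_one, mul_assoc]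
      abel
    calc |M| = ‖M • (q * q)‖ := by rw [norm_smul, hqq, mul_one, Real.norm_eq_abs]
      _ ≤ ‖q * w * q‖ + ‖(q * k) * (a * q)‖ + ‖(q * b) * (k * q)‖ := by
        rw [hsandwich]
        exact (norm_sub_le _ _).trans (add_le_add_left (norm_sub_le _ _) _)
      _ ≤ ‖q‖ * ‖w‖ * ‖q‖ + ‖q * k‖ * (‖a‖ * ‖q‖) + ‖q‖ * ‖b‖ * ‖k * q‖ := by
        gcongr
        · exact norm_mul₃_le
        · exact norm_mul_le_of_le le_rfl (norm_mul_le _ _)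
        · exact norm_mul_le_of_le (norm_mul_le _ _) le_rfl
      _ ≤ ‖w‖ + ε * (‖a‖ + ‖b‖) := by
        rw [hq1, one_mul, mul_one, mul_one, one_mul, add_assoc, mul_add, mul_comm ε ‖b‖]
        gcongr
  refine le_of_forall_pos_le_add fun δ hδ ↦ ?_
  refine (hε (δ / (‖a‖ + ‖b‖ + 1)) (by positivity)).trans (add_le_add_right ?_ _)
  rw [div_mul_eq_mul_div, div_le_iff₀ (by positivity)]
  exact mul_le_mul_of_nonneg_left (lt_add_one _).le hδ.le

theorem exists_mul_self_eq_norm_sub {y : A} (hy : IsSelfAdjoint y) (hmem : ‖y‖ ∈ spectrum ℝ y) :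
    ∃ k : A, IsSelfAdjoint k ∧ 0 ∈ spectrum ℝ k ∧ k * k = algebraMap ℝ A ‖y‖ - y := by
  let _ := CStarAlgebra.spectralOrder A
  have _ := CStarAlgebra.spectralOrderedRing A
  have hnonneg : 0 ≤ algebraMap ℝ A ‖y‖ - y := sub_nonneg.2 hy.le_algebraMap_norm_self
  set k := CFC.sqrt (algebraMap ℝ A ‖y‖ - y)
  have hkk : k * k = algebraMap ℝ A ‖y‖ - y := CFC.sqrt_mul_sqrt_self _ hnonneg
  refine ⟨k, (CFC.sqrt_nonneg _).isSelfAdjoint, ?_, hkk⟩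
  refine (spectrum.zero_mem_iff ℝ).2 fun hunit ↦ spectrum.mem_iff.1 hmem ?_
  exact hkk ▸ hunit.mul hunit

namespace IsDerivation

variable {D : A →ₗ[ℂ] A}

theorem norm_le_norm_add_smul_realPart_of_norm_mem_spectrum (hD : IsDerivation D)
    {y : selfAdjoint A} (hmem : ‖y‖ ∈ spectrum ℝ (y : A)) (t : ℝ) :
    ‖y‖ ≤ ‖y + t • ℜ (D y)‖ := by
  obtain ⟨k, hk, h0, hkk⟩ := exists_mul_self_eq_norm_sub y.2 hmem
  have hy : (y : A) = algebraMap ℝ A ‖y‖ - k * k := by rw [hkk]; simp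
  have hDy : D y = -(D k * k + k * D k) := by
    rw [hy, map_sub, hD k k, Algebra.algebraMap_eq_smul_one, D.map_smul_of_tower, hD.map_one,
      smul_zero, zero_sub]
  have hre : (ℜ (D y) : A) = -(ℜ (D k) * k + k * ℜ (D k)) := by
    rw [hDy]
    simp only [realPart_apply_coe, star_neg, star_add, star_mul, hk.star_eq, smul_mul_assoc,
      mul_smul_comm, add_mul, mul_add]
    module
  have hsplit : (y + t • ℜ (D y) : A)
      = algebraMap ℝ A ‖y‖ + k * (-k - t • ℜ (D k)) + (-(t • ℜ (D k))) * k := by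
    rw [hre]
    nth_rw 1 [hy]
    simp only [mul_sub, mul_neg, neg_mul, smul_mul_assoc, mul_smul_comm]
    module
  calc ‖y‖ = |‖y‖| := (abs_norm y).symm
    _ ≤ ‖(y + t • ℜ (D y) : A)‖ :=
      hsplit ▸ abs_le_norm_algebraMap_add_mul_add_mul hk h0 ‖y‖ _ _

theorem norm_le_norm_add_smul_realPart (hD : IsDerivation D) (y : selfAdjoint A) (t : ℝ) :
    ‖y‖ ≤ ‖y + t • ℜ (D y)‖ := by
  rcases subsingleton_or_nontrivial A with h | h
  · simp [Subsingleton.elim y 0]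
  rcases CStarAlgebra.norm_or_neg_norm_mem_spectrum y.2 with hmem | hmem
  · exact hD.norm_le_norm_add_smul_realPart_of_norm_mem_spectrum hmem t
  · have hneg : ‖-y‖ ∈ spectrum ℝ ((-y : selfAdjoint A) : A) := by
      rw [norm_neg, AddSubgroup.coe_neg, ← spectrum.neg_eq]
      simpa using hmem
    simpa only [AddSubgroup.coe_neg, map_neg, smul_neg, ← neg_add, norm_neg] using
      hD.norm_le_norm_add_smul_realPart_of_norm_mem_spectrum hneg t

theorem continuous_realPart_comp (hD : IsDerivation D) :
    Continuous fun y : selfAdjoint A ↦ ℜ (D y) := by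
  have : CompleteSpace (selfAdjoint A) :=
    (isClosed_eq continuous_star continuous_id : IsClosed {x : A | star x = x}).completeSpace_coe
  let T : selfAdjoint A →ₗ[ℝ] selfAdjoint A :=
    realPart ∘ₗ D.restrictScalars ℝ ∘ₗ (selfAdjoint.submodule ℝ A).subtype
  exact continuous_of_norm_le_norm_add_smul (T := T) fun t _ y ↦
    hD.norm_le_norm_add_smul_realPart y t

theorem continuous_comp_subtype (hD : IsDerivation D) :
    Continuous fun y : selfAdjoint A ↦ D y := by
  have hID : IsDerivation (-Complex.I • D : A →ₗ[ℂ] A) := hD.const_smul (-Complex.I)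
  have hsum : ∀ y : selfAdjoint A,
      D y = (ℜ (D y) : A) + Complex.I • (ℜ ((-Complex.I • D) y) : A) := fun y ↦ by
    simp [realPart_add_I_smul_imaginaryPart]
  refine Continuous.congr ?_ fun y ↦ (hsum y).symm
  exact (continuous_subtype_val.comp hD.continuous_realPart_comp).add
    ((continuous_subtype_val.comp hID.continuous_realPart_comp).const_smul _)

protected theorem continuous (hD : IsDerivation D) : Continuous D := by
  have hre : Continuous (realPart : A →ₗ[ℝ] selfAdjoint A) :=
    realPart.mkContinuous 1 (fun x ↦ by simpa using realPart.norm_le x) |>.continuous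
  have him : Continuous (imaginaryPart : A →ₗ[ℝ] selfAdjoint A) :=
    imaginaryPart.mkContinuous 1 (fun x ↦ by simpa using imaginaryPart.norm_le x) |>.continuous
  have hsum : ∀ x, D x = D (ℜ x) + Complex.I • D (ℑ x) := fun x ↦ by
    rw [← map_smul, ← map_add, realPart_add_I_smul_imaginaryPart]
  refine Continuous.congr ?_ fun x ↦ (hsum x).symm
  exact (hD.continuous_comp_subtype.comp hre).add
    ((hD.continuous_comp_subtype.comp him).const_smul _)

end IsDerivation

end Continuity

section Trace

namespace IsDerivation

theorem trace_map_pow_succ_mul_inv_pow {R M : Type*} [Ring R] [AddCommMonoid M] {D : R → R}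
    (hD : IsDerivation D) {τ : R →+ M} (hτ : ∀ a b, τ (a * b) = τ (b * a)) (u : Rˣ) (n : ℕ) :
    τ (D ↑(u ^ (n + 1)) * ↑(u⁻¹ ^ n)) = (n + 1) • τ (D u) := by
  induction n with
  | zero => simp
  | succ n ih =>
    have hcancel : (u : R) * ↑(u⁻¹ ^ (n + 1)) = ↑(u⁻¹ ^ n) := by
      rw [← Units.val_mul, pow_succ', mul_inv_cancel_left]
    have hone : (↑(u⁻¹ ^ (n + 1)) : R) * ↑(u ^ (n + 1)) = 1 := by
      rw [inv_pow, Units.inv_mul]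
    calc τ (D ↑(u ^ (n + 1 + 1)) * ↑(u⁻¹ ^ (n + 1)))
        = τ (D ↑(u ^ (n + 1)) * (u * ↑(u⁻¹ ^ (n + 1))))
            + τ (↑(u ^ (n + 1)) * (D u * ↑(u⁻¹ ^ (n + 1)))) := by
          rw [pow_succ u, Units.val_mul, hD, add_mul, map_add, mul_assoc, mul_assoc]
      _ = (n + 1) • τ (D u) + τ (D u) := by
          rw [hcancel, ih, hτ, mul_assoc, hone, mul_one]
      _ = (n + 1 + 1) • τ (D u) := (succ_nsmul _ _).symm

variable {A E : Type*} [CStarAlgebra A] [NormedAddCommGroup E] [NormedSpace ℂ E]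
  {D : A →ₗ[ℂ] A} {τ : A →L[ℂ] E}

theorem trace_map_unitary_eq_zero (hD : IsDerivation D) (hτ : ∀ a b, τ (a * b) = τ (b * a))
    (u : unitary A) : τ (D u) = 0 := by
  let D' : A →L[ℂ] A := ⟨D, hD.continuous⟩
  have hbound : ∀ n : ℕ, n • ‖τ (D u)‖ ≤ ‖τ‖ * (‖D'‖ * ‖(1 : A)‖) := by
    intro n
    have hpow : τ (D ↑(u ^ (n + 1)) * ↑(u⁻¹ ^ n)) = (n + 1) • τ (D u) := by
      have := hD.trace_map_pow_succ_mul_inv_pow (τ := (τ : A →+ E)) hτ (Unitary.toUnits u) n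
      rwa [← map_inv, ← map_pow, ← map_pow] at this
    calc n • ‖τ (D u)‖ ≤ (n + 1) • ‖τ (D u)‖ := nsmul_le_nsmul_left (norm_nonneg _) n.le_succ
      _ = ‖τ (D' ↑(u ^ (n + 1)) * ↑(u⁻¹ ^ n))‖ :=
        (RCLike.norm_nsmul ℂ _ _).symm.trans (congrArg norm hpow.symm)
      _ ≤ ‖τ‖ * ‖D' ↑(u ^ (n + 1))‖ := by
        simpa only [CStarRing.norm_mul_coe_unitary] using
          τ.le_opNorm (D' ↑(u ^ (n + 1)) * ↑(u⁻¹ ^ n))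
      _ ≤ ‖τ‖ * (‖D'‖ * ‖(1 : A)‖) := by
        gcongr
        rw [← CStarRing.norm_coe_unitary_mul (u ^ (n + 1)) 1, mul_one]
        exact D'.le_opNorm _
  by_contra hne
  obtain ⟨n, hn⟩ := exists_lt_nsmul (norm_pos_iff.2 hne) (‖τ‖ * (‖D'‖ * ‖(1 : A)‖))
  exact (hbound n).not_gt hn

theorem trace_map_eq_zero (hD : IsDerivation D) (hτ : ∀ a b, τ (a * b) = τ (b * a)) (a : A) :
    τ (D a) = 0 := by
  have hspan : τ.toLinearMap ∘ₗ D = 0 :=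
    LinearMap.ext_on (CStarAlgebra.span_unitary A) fun u hu ↦
      hD.trace_map_unitary_eq_zero hτ ⟨u, hu⟩
  exact LinearMap.congr_fun hspan a

end IsDerivation

theorem continuous_of_map_star_mul_self_nonneg {A : Type*} [CStarAlgebra A] {τ : A →ₗ[ℂ] ℂ}
    (hτ : ∀ a, 0 ≤ τ (star a * a)) : Continuous τ := by
  let _ := CStarAlgebra.spectralOrder A
  have _ := CStarAlgebra.spectralOrderedRing A
  have hnonneg : ∀ x : A, 0 ≤ x → 0 ≤ τ x := fun x hx ↦ by
    obtain ⟨a, rfl⟩ := CStarAlgebra.nonneg_iff_eq_star_mul_self.1 hx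
    exact hτ a
  exact map_continuous (PositiveLinearMap.mk₀ τ hnonneg)

end Trace

theorem isLinearMap_of_isAdjointPair {R M M₁ M₃ : Type*} [CommSemiring R]
    [AddCommMonoid M] [Module R M] [AddCommGroup M₁] [Module R M₁] [AddCommGroup M₃] [Module R M₃]
    {I : R →+* R} {B : M →ₗ[R] M →ₛₗ[I] M₃} {B' : M₁ →ₗ[R] M₁ →ₛₗ[I] M₃} {f : M → M₁} {g : M₁ → M}
    (hfg : LinearMap.IsAdjointPair B B' f g) (hB' : B'.SeparatingLeft) : IsLinearMap R f := by
  have hext : ∀ {x y}, (∀ z, B' x z = B' y z) → x = y := fun {x y} h ↦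
    sub_eq_zero.1 <| hB' _ fun z ↦ by rw [map_sub, LinearMap.sub_apply, h z, sub_self]
  constructor
  · exact fun x y ↦ hext fun z ↦ by simp only [map_add, LinearMap.add_apply, hfg _ _]
  · exact fun c x ↦ hext fun z ↦ by simp only [map_smul, LinearMap.smul_apply, hfg _ _]

theorem stmt15_general {A : Type*} [CStarAlgebra A] (τ : A →ₗ[ℂ] ℂ)
    (hτpos : ∀ a : A, 0 ≤ τ (star a * a)) (hτtr : ∀ a b : A, τ (a * b) = τ (b * a))
    (hτfaithful : ∀ a : A, τ (star a * a) = 0 → a = 0) (φ : A → A)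
    (hφ : ∀ a b : A, ∃ D : A → A, IsLinearMap ℂ D ∧
      (∀ x y : A, D (x * y) = D x * y + x * D y) ∧
      φ a * b + a * φ b = D (a * b)) :
    IsLinearMap ℂ φ ∧ ∀ a b : A, φ (a * b) = φ a * b + a * φ b := by
  have hker : ∀ a b, τ (φ a * b + a * φ b) = 0 := fun a b ↦ by
    obtain ⟨D, hlin, hD, hab⟩ := hφ a b
    let τ' : A →L[ℂ] ℂ := ⟨τ, continuous_of_map_star_mul_self_nonneg hτpos⟩
    exact hab ▸ IsDerivation.trace_map_eq_zero (D := hlin.mk' D) (τ := τ') hD hτtr (a * b)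
  let B : A →ₗ[ℂ] A →ₗ[ℂ] ℂ := (LinearMap.mul ℂ A).compr₂ τ
  have hadj : LinearMap.IsAdjointPair B B φ (-φ) := fun a b ↦ by
    have hab := hker a b
    rw [map_add] at hab
    simpa [B] using eq_neg_of_add_eq_zero_left hab
  have hsep : B.SeparatingLeft := fun a ha ↦ hτfaithful a (hτtr _ _ ▸ ha (star a))
  have hlin : IsLinearMap ℂ φ := isLinearMap_of_isAdjointPair hadj hsep
  have hinv : ∀ u : Aˣ, φ u * ↑u⁻¹ + u * φ ↑u⁻¹ = 0 := fun u ↦ by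
    obtain ⟨D, -, hD, hu⟩ := hφ u ↑u⁻¹
    rw [hu, u.mul_inv, IsDerivation.map_one hD]
  have : IsAddTorsionFree A := .of_isTorsionFree ℂ A
  have h2 : IsSMulRegular A (2 : ℕ) := .of_ne_zero two_ne_zero
  have h1 : φ 1 = 0 := h2.right_eq_zero_of_smul <| by
    simpa only [Units.val_one, inv_one, mul_one, one_mul, two_nsmul] using hinv 1
  have hjordan := isJordanDerivation_of_map_inv (D := hlin.mk' φ) h1 hinv
  exact ⟨hlin, IsJordanDerivation.isDerivation (D := (hlin.mk' φ).toAddMonoidHom) hjordan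
    isSemiprimeRing_of_cstarRing h2⟩

theorem stmt15 {A : Type*} [NormedRing A] [StarRing A] [CStarRing A]
    [NormedAlgebra ℂ A] [CompleteSpace A] [StarModule ℂ A]
    -- `A` is simple: its only closed two-sided ideals are `{0}` and `A`
    (hsimple : ∀ I : TwoSidedIdeal A, IsClosed (I : Set A) → I = ⊥ ∨ I = ⊤)
    -- `τ` is a faithful tracial state on `A`
    (τ : A →ₗ[ℂ] ℂ) (hτ1 : τ 1 = 1) (hτpos : ∀ a : A, 0 ≤ τ (star a * a))
    (hτtr : ∀ a b : A, τ (a * b) = τ (b * a))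
    (hτfaithful : ∀ a : A, τ (star a * a) = 0 → a = 0)
    (φ : A → A)
    -- operational 2-local derivation condition
    (hφ : ∀ a b : A, ∃ D : A → A, IsLinearMap ℂ D ∧
      (∀ x y : A, D (x * y) = D x * y + x * D y) ∧
      φ a * b + a * φ b = D (a * b)) :
    IsLinearMap ℂ φ ∧ ∀ a b : A, φ (a * b) = φ a * b + a * φ b := by
  let _ : CStarAlgebra A := {}
  exact stmt15_general τ hτpos hτtr hτfaithful φ hφ
end
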